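/- For any discrete memoryless channel W: X → Y on finite alphabets, the α-Rényi simulation rate satisfies: R_RST^{(α)}(W) = I(W) (the Shannon capacity) for all α ∈ (0,1], and R_RST^{(α)}(W) = I_α(W) (the order-α Rényi capacity) for all α ∈ {0} ∪ (1,∞]. -/

import Mathlib

open scoped ENNReal NNReal BigOperators Classical
open Filter

noncomputable section

namespace RST

/-- Base-2 logarithm `ℝ≥0∞ → EReal`, with `log 0 = ⊥` and `log ⊤ = ⊤`. -/
def elog2 (s : ℝ≥0∞) : EReal :=
  if s = 0 then ⊥ else if s = ⊤ then ⊤ else ((Real.logb 2 s.toReal : ℝ) : EReal)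

/-- Base-2 logarithm `EReal → EReal` (for nonnegative arguments). -/
def eLog2 (x : EReal) : EReal :=
  if x = ⊤ then ⊤ else if x ≤ 0 then ⊥ else ((Real.logb 2 x.toReal : ℝ) : EReal)

/-- Base-2 exponential `EReal → ℝ≥0∞`. -/
def epow2 (x : EReal) : ℝ≥0∞ :=
  if x = ⊤ then ⊤ else if x = ⊥ then 0 else ENNReal.ofReal ((2 : ℝ) ^ x.toReal)

variable {X Y : Type*}

/-- A probability distribution on a finite alphabet, as an `ℝ≥0∞`-valued function. -/
def IsDist [Fintype X] (P : X → ℝ≥0∞) : Prop := ∑ x, P x = 1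

/-- A discrete memoryless channel: every row is a probability distribution. -/
def IsChannel [Fintype X] [Fintype Y] (W : X → Y → ℝ≥0∞) : Prop := ∀ x, ∑ y, W x y = 1

/-- Order-`α` Rényi divergence (base 2), with the order `α ∈ [0,∞]` encoded as `ℝ≥0∞`.
The conventions `0/0 = 0` and `a/0 = ∞` (for `a > 0`, `α > 1`) are built into `ℝ≥0∞`
arithmetic.  The second argument is allowed to be an arbitrary nonnegative vector. -/
def renyiD [Fintype X] (α : ℝ≥0∞) (P Q : X → ℝ≥0∞) : EReal :=
  if α = 0 then - elog2 (∑ x ∈ Finset.univ.filter fun x => P x ≠ 0, Q x)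
  else if α = 1 then ∑ x, ((P x).toReal : EReal) * elog2 (P x / Q x)
  else if α = ⊤ then elog2 (⨆ x, P x / Q x)
  else (((α.toReal - 1)⁻¹ : ℝ) : EReal) *
    elog2 (∑ x, P x ^ α.toReal * Q x ^ (1 - α.toReal))

/-- The `X`-marginal of a joint distribution on `X × Y`. -/
def margX [Fintype X] [Fintype Y] (P : X × Y → ℝ≥0∞) : X → ℝ≥0∞ := fun x => ∑ y, P (x, y)

/-- Order-`α` Rényi mutual information `I_α(X:Y)_P = min_{Q_Y} D_α(P‖P_X × Q_Y)`. -/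
def renyiMI [Fintype X] [Fintype Y] (α : ℝ≥0∞) (P : X × Y → ℝ≥0∞) : EReal :=
  ⨅ Q : {Q : Y → ℝ≥0∞ // IsDist Q}, renyiD α P fun p => margX P p.1 * Q.1 p.2

/-- The joint input-output distribution `P_X · W`. -/
def joint [Fintype X] [Fintype Y] (PX : X → ℝ≥0∞) (W : X → Y → ℝ≥0∞) : X × Y → ℝ≥0∞ :=
  fun p => PX p.1 * W p.1 p.2

/-- Order-`α` Rényi capacity `I_α(W) = max_{P_X} I_α(X:Y)_{P_X · W}`. -/
def renyiCap [Fintype X] [Fintype Y] (α : ℝ≥0∞) (W : X → Y → ℝ≥0∞) : EReal :=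
  ⨆ P : {P : X → ℝ≥0∞ // IsDist P}, renyiMI α (joint P.1 W)

/-- `N` is a simulation of a channel `X → Y` with communication cost at most `c` bits:
shared randomness `K = Fin m` with distribution `PK`, a message set `{1,…,M}` with
`log₂ M ≤ c`, an encoder `E` and a decoder `D`. -/
def IsSimulation [Fintype X] [Fintype Y] (c : ℝ) (N : X → Y → ℝ≥0∞) : Prop :=
  ∃ (m M : ℕ) (PK : Fin m → ℝ≥0∞) (E : X → Fin m → Fin M → ℝ≥0∞)
    (D : Fin M → Fin m → Y → ℝ≥0∞),
    0 < M ∧ Real.logb 2 M ≤ c ∧ (∑ k, PK k = 1) ∧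
    (∀ x k, ∑ j, E x k j = 1) ∧ (∀ j k, ∑ y, D j k y = 1) ∧
    ∀ x y, N x y = ∑ k, ∑ j, PK k * E x k j * D j k y

/-- `D_α(W, N) := max_x D_α(W(·|x) ‖ N(·|x))`. -/
def chD [Fintype X] [Fintype Y] (α : ℝ≥0∞) (W N : X → Y → ℝ≥0∞) : EReal :=
  ⨆ x, renyiD α (W x) (N x)

/-- `𝖣_α(W, c) := min_{N ∈ A(W,c)} D_α(W, N)`. -/
def simD [Fintype X] [Fintype Y] (α : ℝ≥0∞) (W : X → Y → ℝ≥0∞) (c : ℝ) : EReal :=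
  ⨅ N : {N : X → Y → ℝ≥0∞ // IsSimulation c N}, chD α W N.1

/-- The `n`-fold memoryless extension `W^{×n}` of a channel `W`. -/
def prodCh [Fintype X] [Fintype Y] (n : ℕ) (W : X → Y → ℝ≥0∞) :
    (Fin n → X) → (Fin n → Y) → ℝ≥0∞ :=
  fun xs ys => ∏ i, W (xs i) (ys i)

/-- A sequence of communication costs with rate at most `r`. -/
def RateOK (r : ℝ) (c : ℕ → ℝ) : Prop :=
  (∀ n, 0 ≤ c n) ∧ Filter.limsup (fun n : ℕ => ((c n / n : ℝ) : EReal)) Filter.atTop ≤ (r : EReal)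

/-- Reliability function `E_rf^{(α)}(W, r)`. -/
def Erf [Fintype X] [Fintype Y] (α : ℝ≥0∞) (W : X → Y → ℝ≥0∞) (r : ℝ) : EReal :=
  ⨆ c : {c : ℕ → ℝ // RateOK r c},
    Filter.liminf
      (fun n : ℕ => (((-1 : ℝ) / n : ℝ) : EReal) * eLog2 (simD α (prodCh n W) (c.1 n)))
      Filter.atTop

/-- Strong converse exponent `E_sc^{(α)}(W, r)`. -/
def Esc [Fintype X] [Fintype Y] (α : ℝ≥0∞) (W : X → Y → ℝ≥0∞) (r : ℝ) : EReal :=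
  ⨅ c : {c : ℕ → ℝ // RateOK r c},
    Filter.limsup
      (fun n : ℕ => (((1 : ℝ) / n : ℝ) : EReal) * simD α (prodCh n W) (c.1 n))
      Filter.atTop

/-- The `α`-Rényi simulation rate `R_RST^{(α)}(W)`. -/
def Rrst [Fintype X] [Fintype Y] (α : ℝ≥0∞) (W : X → Y → ℝ≥0∞) : EReal :=
  ⨅ c : {c : ℕ → ℝ // (∀ n, 0 ≤ c n) ∧
      Filter.limsup (fun n : ℕ => simD α (prodCh n W) (c n)) Filter.atTop = 0},
    Filter.limsup (fun n : ℕ => ((c.1 n / n : ℝ) : EReal)) Filter.atTop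

/-- n-fold product of a joint distribution on `X × Y`, as a distribution on pairs of
sequences. -/
def prodJoint [Fintype X] [Fintype Y] (n : ℕ) (P : X × Y → ℝ≥0∞) :
    (Fin n → X) × (Fin n → Y) → ℝ≥0∞ :=
  fun p => ∏ i, P (p.1 i, p.2 i)

/-- n-fold product distribution. -/
def prodDist [Fintype X] (n : ℕ) (P : X → ℝ≥0∞) : (Fin n → X) → ℝ≥0∞ :=
  fun xs => ∏ i, P (xs i)

/-- The type (empirical count vector) of a sequence. -/
def seqType [Fintype Y] [DecidableEq Y] {n : ℕ} (ys : Fin n → Y) : Y → ℕ :=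
  fun y => (Finset.univ.filter fun i => ys i = y).card

/-- The cardinality of the type class of a sequence. -/
def typeClassCard [Fintype Y] [DecidableEq Y] {n : ℕ} (ys : Fin n → Y) : ℕ :=
  (Finset.univ.filter fun zs : Fin n → Y => seqType zs = seqType ys).card

/-- The number of types of sequences in `Y^n`. -/
def numTypes (Y : Type*) [Fintype Y] [DecidableEq Y] (n : ℕ) : ℕ :=
  (Finset.univ.image fun ys : Fin n → Y => seqType ys).card

/-- `Φ_{Y^n}`: the uniform mixture over type classes of `Y^n`. -/
def PhiY (Y : Type*) [Fintype Y] [DecidableEq Y] (n : ℕ) : (Fin n → Y) → ℝ≥0∞ :=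
  fun ys => ((numTypes Y n : ℝ≥0∞) * (typeClassCard ys : ℝ≥0∞))⁻¹

end RST

namespace RST

/-!
Converse: if `N` is a simulation with `c` bits of communication and `Q` is the output distribution
of its decoder fed with a uniformly random message, then `N(·|x) ≤ 2 ^ c * Q` for every input `x`.
Hence `D_α(Wⁿ(·|x) ‖ Q) ≤ c + o(1)` for all `x`, and averaging over i.i.d. inputs bounds `c` from
below by the mutual information of `Wⁿ`, which Sibson's formula makes additive. For `0 < α ≤ 1` the
same bound holds, up to a constant, for every order in `(α, 1)`; letting the order tend to `1` gives
the Shannon capacity.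

Achievability: by Sion's minimax theorem a rate above capacity comes with a single `Q` such that
`D_α(W(·|x) ‖ Q)` is below that rate for every `x`. Rejection sampling from shared i.i.d. samples of
`Qⁿ`, the message being the index of the accepted sample, then simulates a truncation of `Wⁿ`. Since
the divergence is monotone in the order, orders `α ≤ 1` reduce to an order slightly above `1`.
-/

section Logarithm

variable {s : ℝ≥0∞} {t k e : ℝ}

lemma two_rpow_pos (t : ℝ) : 0 < (2 : ℝ≥0∞) ^ t :=
  ENNReal.rpow_pos two_pos ENNReal.ofNat_ne_top

lemma two_rpow_ne_top (t : ℝ) : (2 : ℝ≥0∞) ^ t ≠ ⊤ :=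
  ENNReal.rpow_ne_top_of_ne_zero two_ne_zero ENNReal.ofNat_ne_top

lemma two_rpow_eq_ofReal (t : ℝ) : (2 : ℝ≥0∞) ^ t = ENNReal.ofReal (2 ^ t) := by
  rw [← ENNReal.ofReal_rpow_of_pos two_pos, ENNReal.ofReal_ofNat]

lemma two_rpow_add (s t : ℝ) : (2 : ℝ≥0∞) ^ (s + t) = 2 ^ s * 2 ^ t :=
  ENNReal.rpow_add s t two_ne_zero ENNReal.ofNat_ne_top

lemma two_rpow_neg_mul_self (t : ℝ) : (2 : ℝ≥0∞) ^ (-t) * 2 ^ t = 1 := by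
  rw [← two_rpow_add, neg_add_cancel, ENNReal.rpow_zero]

lemma elog2_le_iff : elog2 s ≤ t ↔ s ≤ 2 ^ t := by
  rw [two_rpow_eq_ofReal, elog2]
  split_ifs with h0 h1
  · simp [h0]
  · simp [h1]
  · rw [EReal.coe_le_coe_iff, Real.logb_le_iff_le_rpow one_lt_two (ENNReal.toReal_pos h0 h1),
      ENNReal.le_ofReal_iff_toReal_le h1 (by positivity)]

lemma le_elog2_iff : t ≤ elog2 s ↔ 2 ^ t ≤ s := by
  rw [two_rpow_eq_ofReal, elog2]
  split_ifs with h0 h1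
  · simpa [h0] using Real.rpow_pos_of_pos two_pos t
  · simp [h1]
  · rw [EReal.coe_le_coe_iff, Real.le_logb_iff_rpow_le one_lt_two (ENNReal.toReal_pos h0 h1),
      ENNReal.ofReal_le_iff_le_toReal h1]

lemma elog2_two_rpow (t : ℝ) : elog2 (2 ^ t) = t :=
  le_antisymm (elog2_le_iff.2 le_rfl) (le_elog2_iff.2 le_rfl)

lemma two_rpow_le_two_rpow_iff {s t : ℝ} : (2 : ℝ≥0∞) ^ s ≤ 2 ^ t ↔ s ≤ t := by
  rw [← elog2_le_iff, elog2_two_rpow, EReal.coe_le_coe_iff]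

lemma elog2_mono : Monotone elog2 := fun s s' h => by
  rw [← EReal.le_of_forall_lt_iff_le]
  exact fun z hz => elog2_le_iff.2 (h.trans (elog2_le_iff.1 hz.le))

lemma exists_eq_two_rpow (h0 : s ≠ 0) (h1 : s ≠ ⊤) : ∃ t : ℝ, s = 2 ^ t := by
  refine ⟨Real.logb 2 s.toReal, ?_⟩
  rw [two_rpow_eq_ofReal, Real.rpow_logb two_pos (by norm_num) (ENNReal.toReal_pos h0 h1),
    ENNReal.ofReal_toReal h1]

lemma elog2_two_rpow_mul (t : ℝ) (s : ℝ≥0∞) : elog2 (2 ^ t * s) = t + elog2 s := by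
  rcases eq_or_ne s 0 with rfl | h0
  · simp [elog2]
  rcases eq_or_ne s ⊤ with rfl | h1
  · simp [elog2, ENNReal.mul_top (two_rpow_pos t).ne']
  obtain ⟨u, rfl⟩ := exists_eq_two_rpow h0 h1
  rw [← two_rpow_add, elog2_two_rpow, elog2_two_rpow, EReal.coe_add]

lemma coe_inv_mul_le_iff_of_pos (hk : 0 < k) (z : EReal) :
    ((k⁻¹ : ℝ) : EReal) * z ≤ e ↔ z ≤ ((k * e : ℝ) : EReal) := by
  rw [EReal.coe_inv, mul_comm, ← div_eq_mul_inv, EReal.coe_mul,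
    EReal.div_le_iff_le_mul (EReal.coe_pos.2 hk) (EReal.coe_ne_top k)]

lemma le_coe_inv_mul_iff_of_pos (hk : 0 < k) (z : EReal) :
    e ≤ ((k⁻¹ : ℝ) : EReal) * z ↔ ((k * e : ℝ) : EReal) ≤ z := by
  rw [EReal.coe_inv, mul_comm _ z, ← div_eq_mul_inv, mul_comm k, EReal.coe_mul,
    EReal.le_div_iff_mul_le (EReal.coe_pos.2 hk) (EReal.coe_ne_top k)]

lemma coe_inv_mul_eq_neg (k : ℝ) (z : EReal) :
    ((k⁻¹ : ℝ) : EReal) * z = -((((-k)⁻¹ : ℝ) : EReal) * z) := by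
  rw [inv_neg, EReal.coe_neg, neg_mul, neg_neg]

lemma coe_inv_mul_le_iff_of_neg (hk : k < 0) (z : EReal) :
    ((k⁻¹ : ℝ) : EReal) * z ≤ e ↔ ((k * e : ℝ) : EReal) ≤ z := by
  rw [coe_inv_mul_eq_neg, EReal.neg_le, ← EReal.coe_neg,
    le_coe_inv_mul_iff_of_pos (neg_pos.2 hk), neg_mul_neg]

lemma le_coe_inv_mul_iff_of_neg (hk : k < 0) (z : EReal) :
    e ≤ ((k⁻¹ : ℝ) : EReal) * z ↔ z ≤ ((k * e : ℝ) : EReal) := by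
  rw [coe_inv_mul_eq_neg, EReal.le_neg, ← EReal.coe_neg,
    coe_inv_mul_le_iff_of_pos (neg_pos.2 hk), neg_mul_neg]

lemma coe_mul_coe_add (k c : ℝ) (z : EReal) : (k : EReal) * (c + z) = k * c + k * z := by
  rcases le_total 0 k with hk | hk
  · exact EReal.left_distrib_of_nonneg_of_ne_top (EReal.coe_nonneg.2 hk) (EReal.coe_ne_top k) _ _
  · have h := EReal.left_distrib_of_nonneg_of_ne_top (EReal.coe_nonneg.2 (neg_nonneg.2 hk))
      (EReal.coe_ne_top (-k)) c z
    rw [EReal.coe_neg, neg_mul, neg_mul, neg_mul, ← EReal.coe_mul, ← EReal.coe_neg] at h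
    rw [← neg_neg ((k : EReal) * (c + z)), h,
      EReal.neg_add (.inl (EReal.coe_ne_bot _)) (.inl (EReal.coe_ne_top _)), sub_eq_add_neg,
      neg_neg, ← EReal.coe_neg, neg_neg, EReal.coe_mul]

lemma coe_sum {ι : Type*} (s : Finset ι) (f : ι → ℝ) :
    ((∑ i ∈ s, f i : ℝ) : EReal) = ∑ i ∈ s, (f i : EReal) :=
  map_sum (⟨⟨Real.toEReal, EReal.coe_zero⟩, EReal.coe_add⟩ : ℝ →+ EReal) f s

end Logarithm

section Divergence

variable {ι : Type*} [Fintype ι] {P Q Q' : ι → ℝ≥0∞} {a e : ℝ}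

/-- The power sum `∑ Pᵃ Q¹⁻ᵃ` whose logarithm, divided by `a - 1`, is the Rényi divergence of
order `a`. -/
def renyiSum (a : ℝ) (P Q : ι → ℝ≥0∞) : ℝ≥0∞ := ∑ x, P x ^ a * Q x ^ (1 - a)

/-- The relative entropy in bits, as a real number; it agrees with the divergence of order `1`
only when `P` is finite and vanishes wherever `Q` does. -/
def klSum (P Q : ι → ℝ≥0∞) : ℝ :=
  ∑ x, (P x).toReal * Real.logb 2 ((P x).toReal / (Q x).toReal)

lemma IsDist.ne_top (h : IsDist P) (x : ι) : P x ≠ ⊤ :=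
  ENNReal.sum_ne_top.1 (by rw [h]; exact ENNReal.one_ne_top) x (Finset.mem_univ x)

lemma IsDist.sum_toReal (hP : IsDist P) : ∑ x, (P x).toReal = 1 := by
  rw [← ENNReal.toReal_sum fun x _ => hP.ne_top x, hP, ENNReal.toReal_one]

lemma renyiD_ofReal (h0 : 0 < a) (h1 : a ≠ 1) (P Q : ι → ℝ≥0∞) :
    renyiD (ENNReal.ofReal a) P Q = (((a - 1)⁻¹ : ℝ) : EReal) * elog2 (renyiSum a P Q) := by
  rw [renyiD, if_neg (by simpa using h0), if_neg (by simpa using h1),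
    if_neg ENNReal.ofReal_ne_top, ENNReal.toReal_ofReal h0.le, renyiSum]

lemma renyiD_le_iff_of_one_lt (h : 1 < a) :
    renyiD (ENNReal.ofReal a) P Q ≤ e ↔ renyiSum a P Q ≤ 2 ^ ((a - 1) * e) := by
  rw [renyiD_ofReal (by linarith) h.ne', coe_inv_mul_le_iff_of_pos (by linarith), elog2_le_iff]

lemma le_renyiD_iff_of_one_lt (h : 1 < a) :
    e ≤ renyiD (ENNReal.ofReal a) P Q ↔ 2 ^ ((a - 1) * e) ≤ renyiSum a P Q := by
  rw [renyiD_ofReal (by linarith) h.ne', le_coe_inv_mul_iff_of_pos (by linarith), le_elog2_iff]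

lemma renyiD_le_iff_of_lt_one (h0 : 0 < a) (h1 : a < 1) :
    renyiD (ENNReal.ofReal a) P Q ≤ e ↔ 2 ^ ((a - 1) * e) ≤ renyiSum a P Q := by
  rw [renyiD_ofReal h0 h1.ne, coe_inv_mul_le_iff_of_neg (by linarith), le_elog2_iff]

lemma le_renyiD_iff_of_lt_one (h0 : 0 < a) (h1 : a < 1) :
    e ≤ renyiD (ENNReal.ofReal a) P Q ↔ renyiSum a P Q ≤ 2 ^ ((a - 1) * e) := by
  rw [renyiD_ofReal h0 h1.ne, le_coe_inv_mul_iff_of_neg (by linarith), elog2_le_iff]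

lemma renyiD_zero (P Q : ι → ℝ≥0∞) :
    renyiD 0 P Q = -elog2 (∑ x ∈ Finset.univ.filter fun x => P x ≠ 0, Q x) := by
  rw [renyiD, if_pos rfl]

lemma renyiD_top (P Q : ι → ℝ≥0∞) : renyiD ⊤ P Q = elog2 (⨆ x, P x / Q x) := by
  rw [renyiD, if_neg ENNReal.top_ne_zero, if_neg ENNReal.top_ne_one, if_pos rfl]

lemma renyiD_one (P Q : ι → ℝ≥0∞) :
    renyiD 1 P Q = ∑ x, ((P x).toReal : EReal) * elog2 (P x / Q x) := by
  rw [renyiD, if_neg one_ne_zero, if_pos rfl]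

lemma renyiD_zero_le_iff :
    renyiD 0 P Q ≤ e ↔ 2 ^ (-e) ≤ ∑ x ∈ Finset.univ.filter fun x => P x ≠ 0, Q x := by
  rw [renyiD_zero, EReal.neg_le, ← EReal.coe_neg, le_elog2_iff]

lemma le_renyiD_zero_iff :
    e ≤ renyiD 0 P Q ↔ ∑ x ∈ Finset.univ.filter fun x => P x ≠ 0, Q x ≤ 2 ^ (-e) := by
  rw [renyiD_zero, EReal.le_neg, ← EReal.coe_neg, elog2_le_iff]

lemma renyiD_top_le_iff : renyiD ⊤ P Q ≤ e ↔ ∀ x, P x ≤ 2 ^ e * Q x := by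
  rw [renyiD_top, elog2_le_iff, iSup_le_iff]
  exact forall_congr' fun x =>
    ENNReal.div_le_iff_le_mul (.inr (two_rpow_ne_top e)) (.inr (two_rpow_pos e).ne')

lemma order_cases (α : ℝ≥0∞) :
    α = 0 ∨ α = 1 ∨ α = ⊤ ∨ ∃ a : ℝ, 0 < a ∧ a ≠ 1 ∧ α = ENNReal.ofReal a := by
  refine or_iff_not_imp_left.2 fun h0 => or_iff_not_imp_left.2 fun h1 =>
    or_iff_not_imp_left.2 fun h2 => ⟨α.toReal, ENNReal.toReal_pos h0 h2, fun h => h1 ?_,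
      (ENNReal.ofReal_toReal h2).symm⟩
  rw [← ENNReal.ofReal_toReal h2, h, ENNReal.ofReal_one]

lemma renyiSum_mono (h1 : a < 1) (h : Q ≤ Q') : renyiSum a P Q ≤ renyiSum a P Q' :=
  Finset.sum_le_sum fun x _ => mul_le_mul_right
    (ENNReal.rpow_le_rpow (h x) (sub_nonneg.2 h1.le)) _

lemma rpow_one_sub_anti {p q : ℝ≥0∞} (h1 : 1 < a) (h : p ≤ q) : q ^ (1 - a) ≤ p ^ (1 - a) := by
  rw [← neg_sub, ENNReal.rpow_neg, ENNReal.rpow_neg, ENNReal.inv_le_inv]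
  exact ENNReal.rpow_le_rpow h (sub_nonneg.2 h1.le)

lemma rpow_mul_rpow_one_sub {p : ℝ≥0∞} (h0 : 0 < a) (hp : p ≠ ⊤) : p ^ a * p ^ (1 - a) = p := by
  rcases eq_or_ne p 0 with rfl | h
  · rw [ENNReal.zero_rpow_of_pos h0, zero_mul]
  · rw [← ENNReal.rpow_add _ _ h hp, add_sub_cancel, ENNReal.rpow_one]

lemma renyiSum_anti (h1 : 1 < a) (h : Q ≤ Q') : renyiSum a P Q' ≤ renyiSum a P Q :=
  Finset.sum_le_sum fun x _ => mul_le_mul_right (rpow_one_sub_anti h1 (h x)) _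

lemma renyiD_anti (α : ℝ≥0∞) (P : ι → ℝ≥0∞) (h : Q ≤ Q') : renyiD α P Q' ≤ renyiD α P Q := by
  rcases order_cases α with rfl | rfl | rfl | ⟨a, h0, h1, rfl⟩
  · rw [renyiD_zero, renyiD_zero, EReal.neg_le_neg_iff]
    exact elog2_mono (Finset.sum_le_sum fun x _ => h x)
  · rw [renyiD_one, renyiD_one]
    exact Finset.sum_le_sum fun x _ => mul_le_mul_of_nonneg_left
      (elog2_mono (ENNReal.div_le_div_left (h x) _)) (EReal.coe_nonneg.2 ENNReal.toReal_nonneg)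
  · rw [renyiD_top, renyiD_top]
    exact elog2_mono (iSup_mono fun x => ENNReal.div_le_div_left (h x) _)
  · rw [renyiD_ofReal h0 h1, renyiD_ofReal h0 h1]
    rcases lt_or_gt_of_ne h1 with h1 | h1
    · rw [coe_inv_mul_eq_neg, coe_inv_mul_eq_neg (a - 1), EReal.neg_le_neg_iff]
      exact mul_le_mul_of_nonneg_left (elog2_mono (renyiSum_mono h1 h))
        (EReal.coe_nonneg.2 (inv_nonneg.2 (by linarith)))
    · exact mul_le_mul_of_nonneg_left (elog2_mono (renyiSum_anti h1 h))
        (EReal.coe_nonneg.2 (inv_nonneg.2 (by linarith)))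

lemma two_rpow_mul_rpow (c r : ℝ) (q : ℝ≥0∞) : (2 ^ c * q) ^ r = 2 ^ (c * r) * q ^ r := by
  rw [ENNReal.mul_rpow_eq_ite, if_neg (by simp [(two_rpow_pos c).ne']),
    ENNReal.rpow_mul]

lemma renyiSum_two_rpow_mul (a c : ℝ) (P Q : ι → ℝ≥0∞) :
    renyiSum a P (fun x => 2 ^ c * Q x) = 2 ^ (c * (1 - a)) * renyiSum a P Q := by
  rw [renyiSum, renyiSum, Finset.mul_sum]
  refine Finset.sum_congr rfl fun x _ => ?_
  rw [two_rpow_mul_rpow, mul_left_comm]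

lemma div_two_rpow_mul (p q : ℝ≥0∞) (c : ℝ) : p / (2 ^ c * q) = 2 ^ (-c) * (p / q) := by
  rw [div_eq_mul_inv, div_eq_mul_inv, ENNReal.mul_inv (.inl (two_rpow_pos c).ne')
    (.inl (two_rpow_ne_top c)), ENNReal.rpow_neg]
  ring

lemma renyiD_two_rpow_mul (α : ℝ≥0∞) (hP : IsDist P) (Q : ι → ℝ≥0∞) (c : ℝ) :
    renyiD α P (fun x => 2 ^ c * Q x) = ((-c : ℝ) : EReal) + renyiD α P Q := by
  rcases order_cases α with rfl | rfl | rfl | ⟨a, h0, h1, rfl⟩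
  · rw [renyiD_zero, renyiD_zero, ← Finset.mul_sum, elog2_two_rpow_mul,
      EReal.neg_add (.inl (EReal.coe_ne_bot _)) (.inl (EReal.coe_ne_top _)), sub_eq_add_neg,
      EReal.coe_neg]
  · simp only [renyiD_one, div_two_rpow_mul, elog2_two_rpow_mul, coe_mul_coe_add,
      Finset.sum_add_distrib, ← EReal.coe_mul, ← coe_sum, ← Finset.sum_mul, hP.sum_toReal,
      one_mul]
  · simp only [renyiD_top, div_two_rpow_mul, ← ENNReal.mul_iSup, elog2_two_rpow_mul]
  · rw [renyiD_ofReal h0 h1, renyiD_ofReal h0 h1, renyiSum_two_rpow_mul, elog2_two_rpow_mul,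
      coe_mul_coe_add, ← EReal.coe_mul]
    congr 2
    field_simp [sub_ne_zero.2 h1]
    ring

lemma renyiD_le_add_of_le (α : ℝ≥0∞) (hP : IsDist P) {c : ℝ} (h : ∀ x, Q x ≤ 2 ^ c * Q' x)
    (he : renyiD α P Q ≤ e) : renyiD α P Q' ≤ ((c + e : ℝ) : EReal) := by
  have hD := (renyiD_anti α P h).trans he
  rw [renyiD_two_rpow_mul α hP, EReal.coe_neg, add_comm, ← sub_eq_add_neg,
    EReal.sub_le_iff_le_add (.inl (EReal.coe_ne_bot c)) (.inl (EReal.coe_ne_top c))] at hD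
  rwa [add_comm, EReal.coe_add]

end Divergence

section Comparison

variable {ι : Type*} [Fintype ι] {P Q f g : ι → ℝ≥0∞} {a b e : ℝ}

lemma sum_rpow_mul_rpow_le (h0 : 0 < a) (h1 : a < 1) (f g : ι → ℝ≥0∞) :
    ∑ x, f x ^ a * g x ^ (1 - a) ≤ (∑ x, f x) ^ a * (∑ x, g x) ^ (1 - a) := by
  have hpq : (a⁻¹).HolderConjugate (1 - a)⁻¹ :=
    Real.HolderConjugate.inv_one_sub_inv h0 h1
  have h := ENNReal.inner_le_Lp_mul_Lq Finset.univ (fun x => f x ^ a)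
    (fun x => g x ^ (1 - a)) hpq
  simpa only [← ENNReal.rpow_mul, mul_inv_cancel₀ h0.ne', mul_inv_cancel₀ (sub_pos.2 h1).ne',
    ENNReal.rpow_one, one_div, inv_inv] using h

lemma renyiSum_le_rpow_sum (h0 : 0 < a) (h1 : a < 1) (hQ : IsDist Q) (f : ι → ℝ≥0∞) :
    renyiSum a f Q ≤ (∑ x, f x) ^ a := by
  have hQ' : ∑ x, Q x = 1 := hQ
  simpa only [renyiSum, hQ', ENNReal.one_rpow, mul_one] using sum_rpow_mul_rpow_le h0 h1 f Q

lemma eq_zero_of_renyiSum_ne_top (h1 : 1 < a) (h : renyiSum a P Q ≠ ⊤) {x : ι} (hx : Q x = 0) :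
    P x = 0 := by
  by_contra hP
  refine ENNReal.sum_ne_top.1 h x (Finset.mem_univ x) ?_
  rw [hx, ENNReal.zero_rpow_of_neg (by linarith), ENNReal.mul_top]
  simp [hP, (by linarith : ¬a < 0)]

lemma rpow_sum_le_renyiSum (h1 : 1 < a) (hQ : IsDist Q) (f : ι → ℝ≥0∞) :
    (∑ x, f x) ^ a ≤ renyiSum a f Q := by
  have h0 : 0 < a := one_pos.trans h1
  by_cases htop : renyiSum a f Q = ⊤
  · exact htop ▸ le_top
  have hf (x) : f x = (f x ^ a * Q x ^ (1 - a)) ^ a⁻¹ * Q x ^ (1 - a⁻¹) := by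
    rcases eq_or_ne (Q x) 0 with hx | hx
    · simp [eq_zero_of_renyiSum_ne_top h1 htop hx, h0]
    rw [ENNReal.mul_rpow_of_nonneg _ _ (inv_nonneg.2 h0.le), ← ENNReal.rpow_mul,
      ← ENNReal.rpow_mul, mul_inv_cancel₀ h0.ne', ENNReal.rpow_one, mul_assoc,
      ← ENNReal.rpow_add _ _ hx (hQ.ne_top x)]
    field_simp
    simp
  have h := renyiSum_le_rpow_sum (inv_pos.2 h0) (inv_lt_one_of_one_lt₀ h1) hQ
    fun x => f x ^ a * Q x ^ (1 - a)
  rwa [renyiSum, ← Finset.sum_congr rfl fun x _ => hf x, ENNReal.le_rpow_inv_iff h0] at h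

lemma renyiSum_le_rpow_renyiSum (h0 : 0 < a) (hab : a < b) (h1 : b < 1) (hQ : IsDist Q)
    (P : ι → ℝ≥0∞) : renyiSum a P Q ≤ renyiSum b P Q ^ (a / b) := by
  have hb : 0 < b := h0.trans hab
  have h1' : a / b < 1 := (div_lt_one hb).2 hab
  refine le_trans (Finset.sum_le_sum fun x _ => le_of_eq ?_)
    (renyiSum_le_rpow_sum (div_pos h0 hb) h1' hQ fun x => P x ^ b * Q x ^ (1 - b))
  rw [ENNReal.mul_rpow_of_nonneg _ _ (div_pos h0 hb).le, ← ENNReal.rpow_mul, ← ENNReal.rpow_mul,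
    mul_assoc, ← ENNReal.rpow_add_of_nonneg _ _ (by have := sub_pos.2 h1; positivity)
      (sub_nonneg.2 h1'.le)]
  congr 2 <;> field_simp
  ring

lemma renyiD_le_mul_of_lt (h0 : 0 < a) (hab : a < b) (h1 : b < 1) (hQ : IsDist Q)
    (h : renyiD (ENNReal.ofReal a) P Q ≤ e) :
    renyiD (ENNReal.ofReal b) P Q ≤ ((b * (1 - a) / (a * (1 - b)) * e : ℝ) : EReal) := by
  have hb : 0 < b := h0.trans hab
  rw [renyiD_le_iff_of_lt_one h0 (hab.trans h1)] at h
  rw [renyiD_le_iff_of_lt_one hb h1]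
  have h' := ENNReal.rpow_le_rpow (h.trans (renyiSum_le_rpow_renyiSum h0 hab h1 hQ P))
    (div_pos hb h0).le
  rw [← ENNReal.rpow_mul, ← ENNReal.rpow_mul, div_mul_div_cancel₀ hb.ne', div_self h0.ne',
    ENNReal.rpow_one] at h'
  convert h' using 2
  have := (sub_pos.2 h1).ne'
  field_simp
  ring

lemma renyiD_one_eq_klSum (hP : ∀ x, P x ≠ ⊤) (hQ : ∀ x, Q x ≠ ⊤) (h : ∀ x, Q x = 0 → P x = 0) :
    renyiD 1 P Q = klSum P Q := by
  rw [renyiD_one, klSum, coe_sum]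
  refine Finset.sum_congr rfl fun x _ => ?_
  rcases eq_or_ne (P x) 0 with h0 | h0
  · simp [h0]
  · rw [elog2, if_neg (ENNReal.div_pos h0 (hQ x)).ne',
      if_neg (ENNReal.div_ne_top (hP x) fun hx => h0 (h x hx)), ENNReal.toReal_div, EReal.coe_mul]

lemma eq_zero_of_renyiD_one_ne_top (hP : ∀ x, P x ≠ ⊤) (hQ : ∀ x, Q x ≠ ⊤)
    (h : renyiD 1 P Q ≠ ⊤) {x : ι} (hx : Q x = 0) : P x = 0 := by
  by_contra h0
  have hbot (y) : ((P y).toReal : EReal) * elog2 (P y / Q y) ≠ ⊥ := by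
    rcases eq_or_ne (P y) 0 with hy | hy
    · simp [hy]
    · rw [elog2, if_neg (ENNReal.div_pos hy (hQ y)).ne']
      split_ifs
      · rw [EReal.coe_mul_top_of_pos (ENNReal.toReal_pos hy (hP y))]
        exact top_ne_bot
      · rw [← EReal.coe_mul]
        exact EReal.coe_ne_bot _
  have htop : ((P x).toReal : EReal) * elog2 (P x / Q x) = ⊤ := by
    rw [hx, ENNReal.div_zero h0, elog2, if_neg ENNReal.top_ne_zero, if_pos rfl,
      EReal.coe_mul_top_of_pos (ENNReal.toReal_pos h0 (hP x))]
  refine h ?_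
  rw [renyiD_one, ← Finset.add_sum_erase _ _ (Finset.mem_univ x), htop]
  refine EReal.top_add_of_ne_bot (Finset.sum_induction _ (· ≠ ⊥) (fun u v hu hv => ?_)
    EReal.zero_ne_bot fun y _ => hbot y)
  exact fun huv => (EReal.add_eq_bot_iff.1 huv).elim hu hv

lemma klSum_le_of_renyiD_one_le (hP : ∀ x, P x ≠ ⊤) (hQ : ∀ x, Q x ≠ ⊤)
    (h : renyiD 1 P Q ≤ e) : (∀ x, Q x = 0 → P x = 0) ∧ klSum P Q ≤ e := by
  have hac : ∀ x, Q x = 0 → P x = 0 := fun x =>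
    eq_zero_of_renyiD_one_ne_top hP hQ (h.trans_lt (EReal.coe_lt_top e)).ne
  rw [renyiD_one_eq_klSum hP hQ hac, EReal.coe_le_coe_iff] at h
  exact ⟨hac, h⟩

lemma rpow_mul_rpow_eq_ofReal {p q : ℝ≥0∞} (hp : p ≠ ⊤) (hq : q ≠ ⊤) (hp0 : p ≠ 0) (hq0 : q ≠ 0)
    (a : ℝ) : p ^ a * q ^ (1 - a) =
      ENNReal.ofReal (p.toReal * (p.toReal / q.toReal) ^ (a - 1)) := by
  have hp' := ENNReal.toReal_pos hp0 hp
  have hq' := ENNReal.toReal_pos hq0 hq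
  rw [← ENNReal.ofReal_toReal hp, ← ENNReal.ofReal_toReal hq, ENNReal.ofReal_rpow_of_pos hp',
    ENNReal.ofReal_rpow_of_pos hq', ← ENNReal.ofReal_mul (by positivity),
    ENNReal.toReal_ofReal hp'.le, ENNReal.toReal_ofReal hq'.le]
  congr 1
  rw [Real.div_rpow hp'.le hq'.le, Real.rpow_sub hp', Real.rpow_sub hq', Real.rpow_sub hq',
    Real.rpow_one, Real.rpow_one]
  field_simp

lemma two_rpow_klSum_le_renyiSum (hP : IsDist P) (hQ : ∀ x, Q x ≠ ⊤)
    (h : ∀ x, Q x = 0 → P x = 0) (a : ℝ) :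
    2 ^ ((a - 1) * klSum P Q) ≤ renyiSum a P Q := by
  have hlog : (a - 1) * klSum P Q * Real.log 2 = ∑ x, (P x).toReal •
      (Real.log ((P x).toReal / (Q x).toReal) * (a - 1)) := by
    simp only [klSum, Real.logb, Finset.mul_sum, Finset.sum_mul, smul_eq_mul]
    exact Finset.sum_congr rfl fun x _ => by field_simp
  rw [two_rpow_eq_ofReal, Real.rpow_def_of_pos two_pos, mul_comm (Real.log 2), hlog]
  refine (ENNReal.ofReal_le_ofReal (convexOn_exp.map_sum_le (fun x _ => ENNReal.toReal_nonneg)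
    hP.sum_toReal fun x _ => Set.mem_univ _)).trans ?_
  rw [ENNReal.ofReal_sum_of_nonneg fun x _ => by positivity]
  refine Finset.sum_le_sum fun x _ => ?_
  rcases eq_or_ne (P x) 0 with h0 | h0
  · simp [h0]
  have hq0 : Q x ≠ 0 := fun hx => h0 (h x hx)
  rw [rpow_mul_rpow_eq_ofReal (hP.ne_top x) (hQ x) h0 hq0, smul_eq_mul, Real.rpow_def_of_pos
    (div_pos (ENNReal.toReal_pos h0 (hP.ne_top x)) (ENNReal.toReal_pos hq0 (hQ x)))]

lemma renyiD_le_renyiD_one (h0 : 0 < a) (h1 : a < 1) (hP : IsDist P) (hQ : ∀ x, Q x ≠ ⊤) :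
    renyiD (ENNReal.ofReal a) P Q ≤ renyiD 1 P Q := by
  rw [← EReal.le_of_forall_lt_iff_le]
  intro e he
  obtain ⟨hac, hkl⟩ := klSum_le_of_renyiD_one_le hP.ne_top hQ he.le
  rw [renyiD_le_iff_of_lt_one h0 h1]
  refine le_trans (ENNReal.rpow_le_rpow_of_exponent_le one_le_two ?_)
    (two_rpow_klSum_le_renyiSum hP hQ hac a)
  exact mul_le_mul_of_nonpos_left hkl (by linarith)

lemma renyiD_one_le_renyiD (h1 : 1 < a) (hP : IsDist P) (hQ : ∀ x, Q x ≠ ⊤) :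
    renyiD 1 P Q ≤ renyiD (ENNReal.ofReal a) P Q := by
  rw [← EReal.le_of_forall_lt_iff_le]
  intro e he
  replace he : renyiSum a P Q < 2 ^ ((a - 1) * e) :=
    lt_of_not_ge fun h => he.not_ge ((le_renyiD_iff_of_one_lt h1).2 h)
  have hac : ∀ x, Q x = 0 → P x = 0 := fun x => eq_zero_of_renyiSum_ne_top h1 he.ne_top
  rw [renyiD_one_eq_klSum hP.ne_top hQ hac, EReal.coe_le_coe_iff]
  refine le_of_not_gt fun hlt => ((two_rpow_klSum_le_renyiSum hP hQ hac a).trans_lt he).not_ge ?_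
  exact ENNReal.rpow_le_rpow_of_exponent_le one_le_two
    (mul_le_mul_of_nonneg_left hlt.le (by linarith))

lemma sum_le_iSup_div (hQ : IsDist Q) (f : ι → ℝ≥0∞) : ∑ x, f x ≤ ⨆ x, f x / Q x := by
  by_cases h : ⨆ x, f x / Q x = ⊤
  · exact h ▸ le_top
  calc ∑ x, f x ≤ ∑ x, (⨆ x, f x / Q x) * Q x := Finset.sum_le_sum fun x _ =>
        (ENNReal.div_le_iff_le_mul (.inr h) (.inl (hQ.ne_top x))).1 (le_iSup (fun x => f x / Q x) x)
    _ = ⨆ x, f x / Q x := by rw [← Finset.mul_sum, show ∑ x, Q x = 1 from hQ, mul_one]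

lemma renyiD_nonneg (α : ℝ≥0∞) (hP : IsDist P) (hQ : IsDist Q) : 0 ≤ renyiD α P Q := by
  have hlt {a : ℝ} (h0 : 0 < a) (h1 : a < 1) : 0 ≤ renyiD (ENNReal.ofReal a) P Q := by
    have h := renyiSum_le_rpow_sum h0 h1 hQ P
    rw [show ∑ x, P x = 1 from hP, ENNReal.one_rpow] at h
    simpa using (le_renyiD_iff_of_lt_one (e := 0) h0 h1).2 (by simpa using h)
  have hone : 0 ≤ renyiD 1 P Q :=
    (hlt one_half_pos one_half_lt_one).trans
      (renyiD_le_renyiD_one one_half_pos one_half_lt_one hP hQ.ne_top)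
  rcases order_cases α with rfl | rfl | rfl | ⟨a, h0, h1, rfl⟩
  · have hQ' : ∑ x ∈ Finset.univ.filter fun x => P x ≠ 0, Q x ≤ ∑ x, Q x :=
      Finset.sum_le_sum_of_subset (Finset.filter_subset _ _)
    simpa using le_renyiD_zero_iff (e := 0).2 (by simpa [show ∑ x, Q x = 1 from hQ] using hQ')
  · exact hone
  · rw [renyiD_top, ← EReal.coe_zero, le_elog2_iff, ENNReal.rpow_zero]
    exact (show ∑ x, P x = 1 from hP) ▸ sum_le_iSup_div hQ P
  · rcases lt_or_gt_of_ne h1 with h1 | h1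
    · exact hlt h0 h1
    · exact hone.trans (renyiD_one_le_renyiD h1 hP hQ.ne_top)

end Comparison

section Simulation

variable {X Y : Type*} [Fintype X] [Fintype Y] {W N : X → Y → ℝ≥0∞} {α β : ℝ≥0∞} {c : ℝ}

lemma isChannel_prodCh (hW : IsChannel W) (n : ℕ) : IsChannel (prodCh n W) := fun xs => by
  simp only [prodCh, ← Fintype.prod_sum fun i => W (xs i), hW _, Finset.prod_const_one]

lemma isDist_prodDist {P : X → ℝ≥0∞} (hP : IsDist P) (n : ℕ) : IsDist (prodDist n P) := by
  simp only [IsDist, prodDist, ← Fintype.prod_sum fun _ : Fin n => P, show ∑ x, P x = 1 from hP,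
    Finset.prod_const_one]

lemma IsSimulation.isChannel (h : IsSimulation c N) : IsChannel N := by
  obtain ⟨m, M, PK, E, D, -, -, hPK, hE, hD, hN⟩ := h
  intro x
  calc ∑ y, N x y = ∑ k, ∑ j, PK k * E x k j * ∑ y, D j k y := by
        simp only [hN, Finset.mul_sum, Finset.sum_comm (s := (Finset.univ : Finset Y))]
    _ = 1 := by simp only [hD, mul_one, ← Finset.mul_sum, hE, hPK]

lemma natCast_le_two_rpow {M : ℕ} (hM : 0 < M) (hc : Real.logb 2 M ≤ c) :
    (M : ℝ≥0∞) ≤ 2 ^ c := by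
  rw [Real.logb_le_iff_le_rpow one_lt_two (by exact_mod_cast hM)] at hc
  rw [two_rpow_eq_ofReal, ← ENNReal.ofReal_natCast]
  exact ENNReal.ofReal_le_ofReal hc

/-- `Q` is the output distribution of the decoder fed with a uniformly random message. -/
lemma IsSimulation.exists_dist_le (h : IsSimulation c N) :
    ∃ Q : Y → ℝ≥0∞, IsDist Q ∧ ∀ x y, N x y ≤ 2 ^ c * Q y := by
  obtain ⟨m, M, PK, E, D, hM, hc, hPK, hE, hD, hN⟩ := h
  have hM0 : (M : ℝ≥0∞) ≠ 0 := by exact_mod_cast hM.ne'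
  have hMtop : (M : ℝ≥0∞) ≠ ⊤ := ENNReal.natCast_ne_top M
  refine ⟨fun y => (M : ℝ≥0∞)⁻¹ * ∑ k, ∑ j, PK k * D j k y, ?_, fun x y => ?_⟩
  · have hsum : ∑ y, ∑ k, ∑ j, PK k * D j k y = M := by
      calc ∑ y, ∑ k, ∑ j, PK k * D j k y = ∑ k, ∑ j, PK k * ∑ y, D j k y := by
            rw [Finset.sum_comm]
            exact Finset.sum_congr rfl fun k _ => by
              rw [Finset.sum_comm]; simp only [Finset.mul_sum]
        _ = M := by
            simp only [hD, mul_one, Finset.sum_const, Finset.card_univ, Fintype.card_fin,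
              nsmul_eq_mul, ← Finset.mul_sum, hPK]
    rw [IsDist, ← Finset.mul_sum, hsum, ENNReal.inv_mul_cancel hM0 hMtop]
  · have hE1 (k j) : E x k j ≤ 1 := hE x k ▸
      Finset.single_le_sum (f := E x k) (fun _ _ => zero_le) (Finset.mem_univ j)
    calc N x y ≤ ∑ k, ∑ j, PK k * D j k y := hN x y ▸ Finset.sum_le_sum fun k _ =>
          Finset.sum_le_sum fun j _ => mul_le_mul_left (mul_le_of_le_one_right' (hE1 k j)) _
      _ = M * ((M : ℝ≥0∞)⁻¹ * ∑ k, ∑ j, PK k * D j k y) := by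
          rw [← mul_assoc, ENNReal.mul_inv_cancel hM0 hMtop, one_mul]
      _ ≤ _ := mul_le_mul_left (natCast_le_two_rpow hM hc) _

variable [Nonempty X]

lemma simD_nonneg (α : ℝ≥0∞) (hW : IsChannel W) (c : ℝ) : 0 ≤ simD α W c :=
  le_iInf fun N => ‹Nonempty X›.elim fun x =>
    (renyiD_nonneg α (hW x) (N.2.isChannel x)).trans (le_iSup (fun x => renyiD α (W x) (N.1 x)) x)

lemma limsup_simD_eq_zero (hW : IsChannel W) {c : ℕ → ℝ}
    (h : limsup (fun n => simD α (prodCh n W) (c n)) atTop ≤ 0) :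
    limsup (fun n => simD α (prodCh n W) (c n)) atTop = 0 :=
  h.antisymm <| le_limsup_of_frequently_le
    (Frequently.of_forall fun n => simD_nonneg α (isChannel_prodCh hW n) _) (by isBoundedDefault)

lemma Rrst_mono (hW : IsChannel W)
    (h : ∀ n, ∀ P Q : (Fin n → Y) → ℝ≥0∞, IsDist P → IsDist Q → renyiD α P Q ≤ renyiD β P Q) :
    Rrst α W ≤ Rrst β W := by
  refine le_iInf fun c => iInf_le_of_le ⟨c.1, c.2.1, limsup_simD_eq_zero hW ?_⟩ le_rfl
  exact (limsup_le_limsup (Eventually.of_forall fun n => iInf_mono fun N =>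
    iSup_mono fun x => h n _ _ (isChannel_prodCh hW n x) (N.2.isChannel x))).trans c.2.2.le

lemma Rrst_le (hW : IsChannel W) {r : ℝ} (hr : 0 ≤ r)
    (h : ∀ ε : ℝ, 0 < ε → ∀ᶠ n : ℕ in atTop, ∃ N, IsSimulation (n * r) N ∧
      ∀ x, renyiD α (prodCh n W x) (N x) ≤ ε) : Rrst α W ≤ r := by
  refine iInf_le_of_le ⟨fun n => n * r, fun n => by positivity, limsup_simD_eq_zero hW ?_⟩ ?_
  · rw [← EReal.le_of_forall_lt_iff_le]
    refine fun ε hε => limsup_le_of_le (by isBoundedDefault) ?_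
    filter_upwards [h ε (EReal.coe_pos.1 hε)] with n ⟨N, hN, hx⟩
    exact iInf_le_of_le ⟨N, hN⟩ (iSup_le hx)
  · refine limsup_le_of_le (by isBoundedDefault) ?_
    filter_upwards [eventually_gt_atTop 0] with n hn
    rw [mul_div_cancel_left₀ _ (by positivity)]

omit [Nonempty X] in
lemma le_Rrst {v C : ℝ}
    (h : ∀ (n : ℕ) (c : ℝ) N, IsSimulation c N →
      (∀ x, renyiD α (prodCh n W x) (N x) ≤ (1 : ℝ)) → n * v ≤ c + C) : v ≤ Rrst α W := by
  refine le_iInf fun c => ?_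
  rw [← EReal.ge_of_forall_gt_iff_ge]
  intro z hz
  rw [EReal.coe_lt_coe_iff] at hz
  have hsim : ∀ᶠ n in atTop, simD α (prodCh n W) (c.1 n) < (1 : ℝ) :=
    eventually_lt_of_limsup_lt (by rw [c.2.2]; exact EReal.coe_pos.2 one_pos) (by isBoundedDefault)
  have hC : ∀ᶠ n : ℕ in atTop, C ≤ n * (v - z) :=
    (tendsto_natCast_atTop_atTop.atTop_mul_const (sub_pos.2 hz)).eventually_ge_atTop C
  refine le_limsup_of_frequently_le (Eventually.frequently ?_) (by isBoundedDefault)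
  filter_upwards [hsim, hC, eventually_gt_atTop 0] with n hsim hC hn
  obtain ⟨N, hN⟩ := iInf_lt_iff.1 hsim
  have hnv := h n (c.1 n) N.1 N.2 fun x =>
    (le_iSup (fun x => renyiD α (prodCh n W x) (N.1 x)) x).trans hN.le
  rw [EReal.coe_le_coe_iff, le_div_iff₀ (by positivity)]
  linarith

end Simulation

section Converse

variable {X Y : Type*} [Fintype X] [Fintype Y] {P : X → ℝ≥0∞} {W N : X → Y → ℝ≥0∞}
  {Q : Y → ℝ≥0∞} {α β : ℝ≥0∞} {a b c e v K : ℝ}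

lemma IsSimulation.exists_dist_renyiD_le (h : IsSimulation c N) (hW : IsChannel W)
    (hD : ∀ x, renyiD α (W x) (N x) ≤ e) :
    ∃ Q : Y → ℝ≥0∞, IsDist Q ∧ ∀ x, renyiD α (W x) Q ≤ ((c + e : ℝ) : EReal) := by
  obtain ⟨Q, hQ, hNQ⟩ := h.exists_dist_le
  exact ⟨Q, hQ, fun x => renyiD_le_add_of_le α (hW x) (hNQ x) (hD x)⟩

lemma le_Rrst_of_forall_dist (hW : IsChannel W)
    (hK : ∀ n, ∀ P Q : (Fin n → Y) → ℝ≥0∞, IsDist P → IsDist Q → renyiD α P Q ≤ (1 : ℝ) →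
      renyiD β P Q ≤ K)
    (h : ∀ n (e : ℝ) (Q : (Fin n → Y) → ℝ≥0∞), IsDist Q →
      (∀ x, renyiD β (prodCh n W x) Q ≤ e) → n * v ≤ e) : v ≤ Rrst α W := by
  refine le_Rrst (C := K) fun n c N hN hD => ?_
  obtain ⟨Q, hQ, hDQ⟩ := hN.exists_dist_renyiD_le (isChannel_prodCh hW n) fun x =>
    hK n _ _ (isChannel_prodCh hW n x) (hN.isChannel x) (hD x)
  exact h n _ Q hQ hDQ

lemma margX_joint (hW : IsChannel W) (P : X → ℝ≥0∞) : margX (joint P W) = P := by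
  funext x
  simp only [margX, joint, ← Finset.mul_sum, hW x, mul_one]

lemma renyiMI_joint_le (α : ℝ≥0∞) (hW : IsChannel W) (P : X → ℝ≥0∞) (hQ : IsDist Q) :
    renyiMI α (joint P W) ≤ renyiD α (joint P W) fun p => P p.1 * Q p.2 := by
  simp only [renyiMI, margX_joint hW]
  exact iInf_le (fun Q : {Q : Y → ℝ≥0∞ // IsDist Q} =>
    renyiD α (joint P W) fun p => P p.1 * Q.1 p.2) ⟨Q, hQ⟩

/-- The unnormalised optimal output distribution `(∑ₓ P(x) W(y|x)ᵃ)^(1/a)` in Sibson's formula for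
the Rényi mutual information of order `a`. -/
def sibsonWeight (a : ℝ) (P : X → ℝ≥0∞) (W : X → Y → ℝ≥0∞) (y : Y) : ℝ≥0∞ :=
  (∑ x, P x * W x y ^ a) ^ a⁻¹

lemma sum_mul_renyiSum (h0 : a ≠ 0) (P : X → ℝ≥0∞) (W : X → Y → ℝ≥0∞) (Q : Y → ℝ≥0∞) :
    ∑ x, P x * renyiSum a (W x) Q = renyiSum a (sibsonWeight a P W) Q := by
  simp only [renyiSum, sibsonWeight, ENNReal.rpow_inv_rpow h0, Finset.mul_sum, Finset.sum_mul,
    mul_assoc]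
  exact Finset.sum_comm

lemma sum_sibsonWeight_prod (ha : 0 < a) (n : ℕ) (P : X → ℝ≥0∞) (W : X → Y → ℝ≥0∞) :
    ∑ ys, sibsonWeight a (prodDist n P) (prodCh n W) ys = (∑ y, sibsonWeight a P W y) ^ n := by
  have h (ys : Fin n → Y) :
      sibsonWeight a (prodDist n P) (prodCh n W) ys = ∏ i, sibsonWeight a P W (ys i) := by
    simp only [sibsonWeight, prodDist, prodCh, ← ENNReal.prod_rpow_of_nonneg ha.le,
      ← Finset.prod_mul_distrib, ← Fintype.prod_sum fun i x => P x * W x (ys i) ^ a]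
    exact (ENNReal.prod_rpow_of_nonneg (inv_nonneg.2 ha.le)).symm
  simp only [h, ← Fintype.prod_sum fun _ : Fin n => sibsonWeight a P W, Finset.prod_const,
    Finset.card_univ, Fintype.card_fin]

lemma mul_rpow_ne_top (ha : 0 ≤ a) (hP : IsDist P) (hW : IsChannel W) (x : X) (y : Y) :
    P x * W x y ^ a ≠ ⊤ :=
  ENNReal.mul_ne_top (hP.ne_top x) (ENNReal.rpow_ne_top_of_nonneg ha (IsDist.ne_top (hW x) y))

lemma sibsonWeight_ne_top (ha : 0 ≤ a) (hP : IsDist P) (hW : IsChannel W) (y : Y) :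
    sibsonWeight a P W y ≠ ⊤ :=
  ENNReal.rpow_ne_top_of_nonneg (inv_nonneg.2 ha)
    (ENNReal.sum_ne_top.2 fun x _ => mul_rpow_ne_top ha hP hW x y)

lemma exists_sum_sibsonWeight_eq (ha : 0 < a) (hP : IsDist P) (hW : IsChannel W) :
    ∃ s : ℝ, ∑ y, sibsonWeight a P W y = 2 ^ s := by
  obtain ⟨x, -, hx⟩ := Finset.exists_ne_zero_of_sum_ne_zero (hP.trans_ne one_ne_zero)
  obtain ⟨y, -, hy⟩ := Finset.exists_ne_zero_of_sum_ne_zero ((hW x).trans_ne one_ne_zero)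
  refine exists_eq_two_rpow (fun h => ?_)
    (ENNReal.sum_ne_top.2 fun y _ => sibsonWeight_ne_top ha.le hP hW y)
  have hzero := Finset.sum_eq_zero_iff.1 h y (Finset.mem_univ y)
  rw [sibsonWeight, ENNReal.rpow_eq_zero_iff_of_pos (inv_pos.2 ha), Finset.sum_eq_zero_iff] at hzero
  exact mul_ne_zero hx (by simpa [ha, ha.not_gt] using hy) (hzero x (Finset.mem_univ x))

lemma IsDist.sum_mul_le (hP : IsDist P) {f : X → ℝ≥0∞} {t : ℝ≥0∞} (h : ∀ x, f x ≤ t) :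
    ∑ x, P x * f x ≤ t := by
  calc ∑ x, P x * f x ≤ ∑ x, P x * t := Finset.sum_le_sum fun x _ => mul_le_mul_right (h x) _
    _ = t := by rw [← Finset.sum_mul, show ∑ x, P x = 1 from hP, one_mul]

lemma IsDist.le_sum_mul (hP : IsDist P) {f : X → ℝ≥0∞} {t : ℝ≥0∞} (h : ∀ x, t ≤ f x) :
    t ≤ ∑ x, P x * f x := by
  calc t = ∑ x, P x * t := by rw [← Finset.sum_mul, show ∑ x, P x = 1 from hP, one_mul]
    _ ≤ ∑ x, P x * f x := Finset.sum_le_sum fun x _ => mul_le_mul_right (h x) _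

lemma sibson_le_of_lt_one (h0 : 0 < a) (h1 : a < 1) (hP : IsDist P) (hQ : IsDist Q) {s : ℝ}
    (hs : ∑ y, sibsonWeight a P W y = 2 ^ s) (h : ∀ x, renyiD (ENNReal.ofReal a) (W x) Q ≤ e) :
    a / (a - 1) * s ≤ e := by
  have hle : (2 : ℝ≥0∞) ^ ((a - 1) * e) ≤ 2 ^ (s * a) := by
    rw [ENNReal.rpow_mul _ s a, ← hs]
    refine le_trans ?_ (renyiSum_le_rpow_sum h0 h1 hQ _)
    rw [← sum_mul_renyiSum h0.ne']
    exact hP.le_sum_mul fun x => (renyiD_le_iff_of_lt_one h0 h1).1 (h x)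
  rw [two_rpow_le_two_rpow_iff] at hle
  rw [div_mul_eq_mul_div, div_le_iff_of_neg (by linarith)]
  linarith

lemma sibson_le_of_one_lt (h1 : 1 < a) (hP : IsDist P) (hQ : IsDist Q) {s : ℝ}
    (hs : ∑ y, sibsonWeight a P W y = 2 ^ s) (h : ∀ x, renyiD (ENNReal.ofReal a) (W x) Q ≤ e) :
    a / (a - 1) * s ≤ e := by
  have hle : (2 : ℝ≥0∞) ^ (s * a) ≤ 2 ^ ((a - 1) * e) := by
    rw [ENNReal.rpow_mul, ← hs]
    refine (rpow_sum_le_renyiSum h1 hQ _).trans ?_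
    rw [← sum_mul_renyiSum (by linarith)]
    exact hP.sum_mul_le fun x => (renyiD_le_iff_of_one_lt h1).1 (h x)
  rw [two_rpow_le_two_rpow_iff] at hle
  rw [div_mul_eq_mul_div, div_le_iff₀ (by linarith)]
  linarith

lemma sibson_le_Rrst (h0 : 0 < a) (h1 : a ≠ 1) (hW : IsChannel W) (hP : IsDist P) {s : ℝ}
    (hs : ∑ y, sibsonWeight a P W y = 2 ^ s)
    (hK : ∀ n, ∀ P Q : (Fin n → Y) → ℝ≥0∞, IsDist P → IsDist Q → renyiD α P Q ≤ (1 : ℝ) →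
      renyiD (ENNReal.ofReal a) P Q ≤ K) :
    ((a / (a - 1) * s : ℝ) : EReal) ≤ Rrst α W := by
  refine le_Rrst_of_forall_dist hW hK fun n e Q hQ h => ?_
  have hsn : ∑ ys, sibsonWeight a (prodDist n P) (prodCh n W) ys = 2 ^ (s * n) := by
    rw [sum_sibsonWeight_prod h0, hs, ENNReal.rpow_mul, ENNReal.rpow_natCast]
  have hle : a / (a - 1) * (s * n) ≤ e := (lt_or_gt_of_ne h1).elim
    (fun h1 => sibson_le_of_lt_one h0 h1 (isDist_prodDist hP n) hQ hsn h)
    (fun h1 => sibson_le_of_one_lt h1 (isDist_prodDist hP n) hQ hsn h)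
  linarith

lemma renyiSum_joint (h0 : 0 < a) (hP : IsDist P) (W : X → Y → ℝ≥0∞) (Q : Y → ℝ≥0∞) :
    renyiSum a (joint P W) (fun p => P p.1 * Q p.2) = renyiSum a (sibsonWeight a P W) Q := by
  rw [← sum_mul_renyiSum h0.ne', renyiSum, Fintype.sum_prod_type]
  refine Finset.sum_congr rfl fun x _ => ?_
  rw [renyiSum, Finset.mul_sum]
  refine Finset.sum_congr rfl fun y _ => ?_
  rcases eq_or_ne (P x) 0 with hx | hx
  · simp [joint, hx, h0]
  · rw [joint, ENNReal.mul_rpow_of_nonneg _ _ h0.le, ENNReal.mul_rpow_eq_ite, if_neg (by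
      simp [hx, hP.ne_top x]), mul_mul_mul_comm, ← ENNReal.rpow_add _ _ hx (hP.ne_top x),
      add_sub_cancel, ENNReal.rpow_one]

lemma renyiSum_two_rpow_neg_mul_self (h0 : 0 < a) {f : Y → ℝ≥0∞} {s : ℝ} (hs : ∑ y, f y = 2 ^ s) :
    renyiSum a f (fun y => 2 ^ (-s) * f y) = 2 ^ (s * a) := by
  have hf (y) : f y ≠ ⊤ :=
    ENNReal.sum_ne_top.1 (hs ▸ two_rpow_ne_top s) y (Finset.mem_univ y)
  rw [renyiSum_two_rpow_mul, renyiSum,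
    Finset.sum_congr rfl fun y _ => rpow_mul_rpow_one_sub h0 (hf y), hs, ← two_rpow_add]
  ring_nf

lemma renyiMI_joint_le_sibson (h1 : 1 < a) (hW : IsChannel W) (hP : IsDist P) {s : ℝ}
    (hs : ∑ y, sibsonWeight a P W y = 2 ^ s) :
    renyiMI (ENNReal.ofReal a) (joint P W) ≤ ((a / (a - 1) * s : ℝ) : EReal) := by
  have hQ : IsDist fun y => 2 ^ (-s) * sibsonWeight a P W y := by
    rw [IsDist, ← Finset.mul_sum, hs, two_rpow_neg_mul_self]
  refine (renyiMI_joint_le _ hW P hQ).trans ?_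
  rw [renyiD_le_iff_of_one_lt h1,
    renyiSum_joint (by linarith) hP W fun y => 2 ^ (-s) * sibsonWeight a P W y,
    renyiSum_two_rpow_neg_mul_self (by linarith) hs]
  have : a - 1 ≠ 0 := (sub_pos.2 h1).ne'
  exact le_of_eq (by congr 1; field_simp)

lemma renyiCap_le_Rrst_of_one_lt (h1 : 1 < a) (hW : IsChannel W) :
    renyiCap (ENNReal.ofReal a) W ≤ Rrst (ENNReal.ofReal a) W := by
  refine iSup_le fun ⟨P, hP⟩ => ?_
  obtain ⟨s, hs⟩ := exists_sum_sibsonWeight_eq (by linarith : 0 < a) hP hW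
  exact (renyiMI_joint_le_sibson h1 hW hP hs).trans
    (sibson_le_Rrst (by linarith) h1.ne' hW hP hs fun _ _ _ _ _ h => h)

end Converse

section ConverseExtremeOrders

variable {X Y : Type*} [Fintype X] [Fintype Y] {P : X → ℝ≥0∞} {W : X → Y → ℝ≥0∞}
  {Q : Y → ℝ≥0∞} {e : ℝ}

lemma sum_diag_pow_le (g : Y → X) (n : ℕ) {Q : (Fin n → Y) → ℝ≥0∞}
    (hQ : IsDist Q) (h : ∀ x, renyiD ⊤ (prodCh n W x) Q ≤ e) :
    (∑ y, W (g y) y) ^ n ≤ 2 ^ e := by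
  calc (∑ y, W (g y) y) ^ n = ∑ ys : Fin n → Y, prodCh n W (g ∘ ys) ys := by
        simp only [prodCh, Function.comp_apply, ← Fintype.prod_sum fun (_ : Fin n) y => W (g y) y,
          Finset.prod_const, Finset.card_univ, Fintype.card_fin]
    _ ≤ ∑ ys, 2 ^ e * Q ys := Finset.sum_le_sum fun ys _ => renyiD_top_le_iff.1 (h (g ∘ ys)) ys
    _ = 2 ^ e := by rw [← Finset.mul_sum, show ∑ ys, Q ys = 1 from hQ, mul_one]

lemma sum_diag_ne_zero_of_forall_le (hW : IsChannel W) (x : X) {g : Y → X}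
    (hg : ∀ x y, W x y ≤ W (g y) y) : ∑ y, W (g y) y ≠ 0 :=
  (zero_lt_one.trans_le ((hW x).ge.trans (Finset.sum_le_sum fun y _ => hg x y))).ne'

lemma renyiCap_top_le_Rrst [Nonempty X] (hW : IsChannel W) : renyiCap ⊤ W ≤ Rrst ⊤ W := by
  choose g hg using fun y => Finite.exists_max fun x => W x y
  obtain ⟨s, hs⟩ := exists_eq_two_rpow (sum_diag_ne_zero_of_forall_le hW (Classical.arbitrary X)
    fun x y => hg y x) (ENNReal.sum_ne_top.2 fun y _ => IsDist.ne_top (hW (g y)) y)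
  have hs_le : (s : EReal) ≤ Rrst ⊤ W :=
    le_Rrst_of_forall_dist hW (fun _ _ _ _ _ h => h) fun n e Q hQ h => by
      have hpow := sum_diag_pow_le g n hQ h
      rwa [hs, ← ENNReal.rpow_natCast, ← ENNReal.rpow_mul, two_rpow_le_two_rpow_iff,
        mul_comm] at hpow
  have hQ : IsDist fun y => 2 ^ (-s) * W (g y) y := by
    rw [IsDist, ← Finset.mul_sum, hs, two_rpow_neg_mul_self]
  refine iSup_le fun ⟨P, _⟩ => ((renyiMI_joint_le ⊤ hW P hQ).trans ?_).trans hs_le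
  rw [renyiD_top_le_iff]
  intro ⟨x, y⟩
  rw [joint, mul_left_comm, ← mul_assoc (2 ^ s), ← two_rpow_add, add_neg_cancel, ENNReal.rpow_zero,
    one_mul]
  exact mul_le_mul_right (hg y x) _

/-- The input mass compatible with the output `y`, which determines the mutual information of
order `0`. -/
def supportWeight (P : X → ℝ≥0∞) (W : X → Y → ℝ≥0∞) (y : Y) : ℝ≥0∞ :=
  ∑ x, if W x y ≠ 0 then P x else 0

lemma supportWeight_prod (n : ℕ) (P : X → ℝ≥0∞) (W : X → Y → ℝ≥0∞) (ys : Fin n → Y) :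
    supportWeight (prodDist n P) (prodCh n W) ys = ∏ i, supportWeight P W (ys i) := by
  simp only [supportWeight, Fintype.prod_sum fun (i : Fin n) x => if W x (ys i) ≠ 0 then P x else 0,
    Finset.prod_ite_zero, prodDist, prodCh, Finset.prod_ne_zero_iff]
  exact Finset.sum_congr rfl fun _ _ => by congr

lemma sum_mul_sum_support (P : X → ℝ≥0∞) (W : X → Y → ℝ≥0∞) (Q : Y → ℝ≥0∞) :
    ∑ x, P x * ∑ y ∈ Finset.univ.filter (fun y => W x y ≠ 0), Q y =
      ∑ y, Q y * supportWeight P W y := by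
  simp only [supportWeight, Finset.mul_sum, Finset.sum_filter, mul_ite, mul_zero]
  rw [Finset.sum_comm]
  simp only [mul_comm]

lemma two_rpow_neg_le_of_supportWeight_le (hP : IsDist P) (hQ : IsDist Q) {G : ℝ≥0∞}
    (hG : ∀ y, supportWeight P W y ≤ G) (h : ∀ x, renyiD 0 (W x) Q ≤ e) : 2 ^ (-e) ≤ G := by
  refine (hP.le_sum_mul fun x => renyiD_zero_le_iff.1 (h x)).trans ?_
  rw [sum_mul_sum_support]
  exact hQ.sum_mul_le hG

lemma renyiMI_zero_joint_le (hW : IsChannel W) (P : X → ℝ≥0∞) (y : Y) :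
    renyiMI 0 (joint P W) ≤ -elog2 (supportWeight P W y) := by
  have hQ : IsDist (Pi.single y 1 : Y → ℝ≥0∞) := by simp [IsDist]
  refine (renyiMI_joint_le 0 hW P hQ).trans ?_
  rw [renyiD_zero, EReal.neg_le_neg_iff]
  refine elog2_mono (le_of_eq ?_)
  rw [supportWeight, Finset.sum_filter, Fintype.sum_prod_type]
  refine Finset.sum_congr rfl fun x _ => ?_
  rw [Finset.sum_eq_single y (fun y' _ hy => by simp [Pi.single_eq_of_ne hy]) (by simp)]
  by_cases hx : P x = 0 <;> simp [joint, hx]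

lemma exists_supportWeight_ne_zero (hP : IsDist P) (hW : IsChannel W) :
    ∃ y, supportWeight P W y ≠ 0 := by
  obtain ⟨x, -, hx⟩ := Finset.exists_ne_zero_of_sum_ne_zero (hP.trans_ne one_ne_zero)
  obtain ⟨y, -, hy⟩ := Finset.exists_ne_zero_of_sum_ne_zero ((hW x).trans_ne one_ne_zero)
  refine ⟨y, fun h => hx ?_⟩
  simpa [hy] using Finset.sum_eq_zero_iff.1 h x (Finset.mem_univ x)

omit [Fintype Y] in
lemma supportWeight_ne_top (hP : IsDist P) (W : X → Y → ℝ≥0∞) (y : Y) :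
    supportWeight P W y ≠ ⊤ :=
  ENNReal.sum_ne_top.2 fun x _ => by split_ifs <;> simp [hP.ne_top x]

lemma renyiCap_zero_le_Rrst (hW : IsChannel W) : renyiCap 0 W ≤ Rrst 0 W := by
  refine iSup_le fun ⟨P, hP⟩ => ?_
  obtain ⟨y', hy'⟩ := exists_supportWeight_ne_zero hP hW
  have : Nonempty Y := ⟨y'⟩
  obtain ⟨y, hy⟩ := Finite.exists_max (supportWeight P W)
  obtain ⟨s, hs⟩ := exists_eq_two_rpow ((pos_iff_ne_zero.2 hy').trans_le (hy y')).ne'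
    (supportWeight_ne_top hP W y)
  refine (renyiMI_zero_joint_le hW P y).trans ?_
  rw [hs, elog2_two_rpow, ← EReal.coe_neg]
  refine le_Rrst_of_forall_dist hW (fun _ _ _ _ _ h => h) fun n e Q hQ h => ?_
  have hle : (2 : ℝ≥0∞) ^ (-e) ≤ 2 ^ (s * n) := by
    refine two_rpow_neg_le_of_supportWeight_le (isDist_prodDist hP n) hQ (fun ys => ?_) h
    rw [supportWeight_prod, ENNReal.rpow_mul, ENNReal.rpow_natCast, ← hs]
    simpa using Finset.prod_le_pow_card Finset.univ _ _ fun i _ => hy (ys i)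
  rw [two_rpow_le_two_rpow_iff] at hle
  linarith

end ConverseExtremeOrders

section ConverseShannon

variable {X Y : Type*} [Fintype X] [Fintype Y] {P : X → ℝ≥0∞} {W : X → Y → ℝ≥0∞} {α : ℝ≥0∞}

lemma hasDerivAt_const_rpow_one {c : ℝ} (hc : 0 ≤ c) :
    HasDerivAt (fun b : ℝ => c ^ b) (c * Real.log c) 1 := by
  rcases hc.eq_or_lt with rfl | hc
  · rw [zero_mul]
    refine (hasDerivAt_const (1 : ℝ) (0 : ℝ)).congr_of_eventuallyEq ?_
    filter_upwards [eventually_ne_nhds one_ne_zero] with b hb using Real.zero_rpow hb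
  · simpa using (Real.hasStrictDerivAt_const_rpow hc 1).hasDerivAt

lemma hasDerivAt_rpow_inv_one {g : ℝ → ℝ} {g' : ℝ} (hg : HasDerivAt g g' 1) (h1 : 0 < g 1) :
    HasDerivAt (fun b => g b ^ b⁻¹) (g' - g 1 * Real.log (g 1)) 1 := by
  convert hg.rpow (hasDerivAt_inv one_ne_zero) h1 using 1
  simp
  ring

lemma hasDerivAt_sibson_one {p w : X → ℝ} (hp : ∀ x, 0 ≤ p x) (hw : ∀ x, 0 ≤ w x) :
    HasDerivAt (fun b : ℝ => (∑ x, p x * w x ^ b) ^ b⁻¹)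
      (∑ x, p x * (w x * Real.log (w x / ∑ x, p x * w x))) 1 := by
  have hpw (x) : 0 ≤ p x * w x := mul_nonneg (hp x) (hw x)
  rcases (Finset.sum_nonneg fun x _ => hpw x).eq_or_lt with h0 | hpos
  · have hzero (x) : p x * w x = 0 :=
      (Finset.sum_eq_zero_iff_of_nonneg fun x _ => hpw x).1 h0.symm x (Finset.mem_univ x)
    simp only [← mul_assoc, hzero, zero_mul, Finset.sum_const_zero]
    refine (hasDerivAt_const (1 : ℝ) (0 : ℝ)).congr_of_eventuallyEq ?_
    filter_upwards [eventually_ne_nhds one_ne_zero] with b hb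
    have hb_zero (x) : p x * w x ^ b = 0 := by
      rcases mul_eq_zero.1 (hzero x) with h | h <;> simp [h, hb]
    simp [hb_zero, hb]
  · have hsum : HasDerivAt (fun b : ℝ => ∑ x, p x * w x ^ b)
        (∑ x, p x * (w x * Real.log (w x))) 1 :=
      HasDerivAt.fun_sum fun x _ => (hasDerivAt_const_rpow_one (hw x)).const_mul (p x)
    convert hasDerivAt_rpow_inv_one hsum (by simpa using hpos) using 1
    simp only [Real.rpow_one]
    rw [Finset.sum_mul, ← Finset.sum_sub_distrib]
    refine Finset.sum_congr rfl fun x _ => ?_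
    rcases (hw x).eq_or_lt with hx | hx
    · simp [← hx]
    · rw [Real.log_div hx.ne' hpos.ne']
      ring

/-- The output distribution of the channel `W` under the input distribution `P`. -/
def outDist (P : X → ℝ≥0∞) (W : X → Y → ℝ≥0∞) (y : Y) : ℝ≥0∞ := ∑ x, P x * W x y

/-- The Shannon mutual information, in bits, between the input and the output of the channel `W`
under the input distribution `P`. -/
def mutualInfo (P : X → ℝ≥0∞) (W : X → Y → ℝ≥0∞) : ℝ :=
  ∑ x, (P x).toReal * klSum (W x) (outDist P W)

lemma isDist_outDist (hP : IsDist P) (hW : IsChannel W) : IsDist (outDist P W) := by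
  simp only [IsDist, outDist]
  rw [Finset.sum_comm]
  simp only [← Finset.mul_sum, hW _, mul_one, show ∑ x, P x = 1 from hP]

lemma toReal_outDist (hP : IsDist P) (hW : IsChannel W) (y : Y) :
    (outDist P W y).toReal = ∑ x, (P x).toReal * (W x y).toReal := by
  simp only [outDist, ← ENNReal.toReal_mul]
  exact ENNReal.toReal_sum fun x _ => ENNReal.mul_ne_top (hP.ne_top x) (IsDist.ne_top (hW x) y)

lemma klSum_joint (hP : IsDist P) (W : X → Y → ℝ≥0∞) (Q : Y → ℝ≥0∞) :
    klSum (joint P W) (fun p => P p.1 * Q p.2) = ∑ x, (P x).toReal * klSum (W x) Q := by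
  rw [klSum, Fintype.sum_prod_type]
  refine Finset.sum_congr rfl fun x _ => ?_
  rw [klSum, Finset.mul_sum]
  refine Finset.sum_congr rfl fun y _ => ?_
  rcases eq_or_ne (P x) 0 with hx | hx
  · simp [joint, hx]
  · rw [joint, ENNReal.toReal_mul, ENNReal.toReal_mul,
      mul_div_mul_left _ _ (ENNReal.toReal_pos hx (hP.ne_top x)).ne', mul_assoc]

lemma renyiD_one_joint (hP : IsDist P) (hW : IsChannel W) {Q : Y → ℝ≥0∞}
    (hQ : ∀ y, Q y ≠ ⊤) (h : ∀ x y, Q y = 0 → P x * W x y = 0) :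
    renyiD 1 (joint P W) (fun p => P p.1 * Q p.2) =
      ((∑ x, (P x).toReal * klSum (W x) Q : ℝ) : EReal) := by
  rw [← klSum_joint hP]
  refine renyiD_one_eq_klSum (P := joint P W) (Q := fun p => P p.1 * Q p.2)
    (fun p => ENNReal.mul_ne_top (hP.ne_top _) (IsDist.ne_top (hW _) _))
    (fun p => ENNReal.mul_ne_top (hP.ne_top _) (hQ _)) fun ⟨x, y⟩ hxy => ?_
  rcases mul_eq_zero.1 hxy with hx | hy
  · exact mul_eq_zero_of_left hx _
  · exact h x y hy

lemma renyiMI_one_joint_le (hP : IsDist P) (hW : IsChannel W) :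
    renyiMI 1 (joint P W) ≤ mutualInfo P W := by
  have hQ := isDist_outDist hP hW
  refine (renyiMI_joint_le 1 hW P hQ).trans_eq ?_
  rw [renyiD_one_joint hP hW hQ.ne_top fun x y hy =>
    Finset.sum_eq_zero_iff.1 hy x (Finset.mem_univ x)]
  rfl

lemma toReal_sum_sibsonWeight {b : ℝ} (hb : 0 < b) (hP : IsDist P) (hW : IsChannel W) :
    (∑ y, sibsonWeight b P W y).toReal =
      ∑ y, (∑ x, (P x).toReal * (W x y).toReal ^ b) ^ b⁻¹ := by
  rw [ENNReal.toReal_sum fun y _ => sibsonWeight_ne_top hb.le hP hW y]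
  refine Finset.sum_congr rfl fun y _ => ?_
  rw [sibsonWeight, ← ENNReal.toReal_rpow,
    ENNReal.toReal_sum fun x _ => mul_rpow_ne_top hb.le hP hW x y]
  simp only [ENNReal.toReal_mul, ENNReal.toReal_rpow]

lemma toReal_sum_sibsonWeight_one (hP : IsDist P) (hW : IsChannel W) :
    (∑ y, sibsonWeight 1 P W y).toReal = 1 := by
  simp only [sibsonWeight, ENNReal.rpow_one, inv_one]
  rw [show ∑ y, ∑ x, P x * W x y = 1 from isDist_outDist hP hW, ENNReal.toReal_one]

lemma hasDerivAt_logb_sum_sibsonWeight (hP : IsDist P) (hW : IsChannel W) :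
    HasDerivAt (fun b => Real.logb 2 (∑ y, sibsonWeight b P W y).toReal) (mutualInfo P W) 1 := by
  have hsum : HasDerivAt (fun b => (∑ y, sibsonWeight b P W y).toReal)
      (∑ y, ∑ x, (P x).toReal * ((W x y).toReal *
        Real.log ((W x y).toReal / (outDist P W y).toReal))) 1 := by
    refine HasDerivAt.congr_of_eventuallyEq (f := fun b : ℝ =>
      ∑ y, (∑ x, (P x).toReal * (W x y).toReal ^ b) ^ b⁻¹) ?_ ?_
    · simp only [toReal_outDist hP hW]
      exact HasDerivAt.fun_sum fun y _ => hasDerivAt_sibson_one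
        (fun x => ENNReal.toReal_nonneg) fun x => ENNReal.toReal_nonneg
    · filter_upwards [eventually_gt_nhds one_pos] with b hb using toReal_sum_sibsonWeight hb hP hW
  have hone := toReal_sum_sibsonWeight_one hP hW
  refine ((hsum.log (by rw [hone]; exact one_ne_zero)).div_const (Real.log 2)).congr_deriv ?_
  rw [hone, div_one, Finset.sum_comm, mutualInfo, Finset.sum_div]
  refine Finset.sum_congr rfl fun x _ => ?_
  rw [klSum, Finset.mul_sum, Finset.sum_div]
  exact Finset.sum_congr rfl fun y _ => by rw [Real.logb]; ring

lemma tendsto_sibson (hP : IsDist P) (hW : IsChannel W) :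
    Tendsto (fun b => b / (b - 1) * Real.logb 2 (∑ y, sibsonWeight b P W y).toReal)
      (nhdsWithin 1 {1}ᶜ) (nhds (mutualInfo P W)) := by
  have hslope := (hasDerivAt_logb_sum_sibsonWeight hP hW).tendsto_slope
  have hid : Tendsto (fun b : ℝ => b) (nhdsWithin 1 {1}ᶜ) (nhds 1) :=
    tendsto_id.mono_left nhdsWithin_le_nhds
  convert hid.mul hslope using 2 with b
  · rw [slope_def_field, toReal_sum_sibsonWeight_one hP hW, Real.logb_one, sub_zero]
    ring
  · rw [one_mul]

lemma mutualInfo_le_Rrst {a : ℝ} (h0 : 0 < a) (h1 : a < 1) (hP : IsDist P) (hW : IsChannel W)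
    (hK : ∀ b, a < b → b < 1 → ∃ K : ℝ, ∀ n, ∀ P Q : (Fin n → Y) → ℝ≥0∞, IsDist P → IsDist Q →
      renyiD α P Q ≤ (1 : ℝ) → renyiD (ENNReal.ofReal b) P Q ≤ K) :
    mutualInfo P W ≤ Rrst α W := by
  have hlim := (continuous_coe_real_ereal.tendsto _).comp
    ((tendsto_sibson hP hW).mono_left (nhdsWithin_mono 1 fun b (hb : b ∈ Set.Iio 1) => hb.ne))
  refine le_of_tendsto hlim ?_
  filter_upwards [Ioo_mem_nhdsLT h1] with b hb
  obtain ⟨K, hK⟩ := hK b hb.1 hb.2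
  obtain ⟨s, hs⟩ := exists_sum_sibsonWeight_eq (h0.trans hb.1) hP hW
  have hlog : Real.logb 2 (∑ y, sibsonWeight b P W y).toReal = s := by
    rw [hs, two_rpow_eq_ofReal, ENNReal.toReal_ofReal (by positivity),
      Real.logb_rpow two_pos (by norm_num)]
  rw [Function.comp_apply, hlog]
  exact sibson_le_Rrst (h0.trans hb.1) hb.2.ne hW hP hs hK

lemma renyiCap_one_le_Rrst_of_lt_one {a : ℝ} (h0 : 0 < a) (h1 : a < 1) (hW : IsChannel W) :
    renyiCap 1 W ≤ Rrst (ENNReal.ofReal a) W :=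
  iSup_le fun ⟨_, hP⟩ => (renyiMI_one_joint_le hP hW).trans <|
    mutualInfo_le_Rrst h0 h1 hP hW fun _ hab hb =>
      ⟨_, fun _ _ _ _ hQ h => renyiD_le_mul_of_lt h0 hab hb hQ h⟩

lemma renyiCap_one_le_Rrst_one (hW : IsChannel W) : renyiCap 1 W ≤ Rrst 1 W :=
  iSup_le fun ⟨_, hP⟩ => (renyiMI_one_joint_le hP hW).trans <|
    mutualInfo_le_Rrst one_half_pos one_half_lt_one hP hW fun _ hb0 hb1 =>
      ⟨1, fun _ _ _ hP hQ h =>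
        (renyiD_le_renyiD_one (one_half_pos.trans hb0) hb1 hP hQ.ne_top).trans h⟩

end ConverseShannon

section RejectionSampling

universe u

variable {X : Type*} {Y : Type u} [Fintype Y]

/-- Simulability of `N` with exactly `M` messages; the shared randomness may live on any finite
alphabet. -/
def SimulableWith (M : ℕ) (N : X → Y → ℝ≥0∞) : Prop :=
  ∃ (K : Type u) (_ : Fintype K) (PK : K → ℝ≥0∞)
    (E : X → K → Fin M → ℝ≥0∞) (D : Fin M → K → Y → ℝ≥0∞),
    IsDist PK ∧ (∀ x k, IsDist (E x k)) ∧ (∀ j k, IsDist (D j k)) ∧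
      ∀ x y, N x y = ∑ k, ∑ j, PK k * E x k j * D j k y

variable {Q : Y → ℝ≥0∞} {V N a : X → Y → ℝ≥0∞} {M : ℕ} {t c : ℝ}

lemma SimulableWith.isSimulation [Fintype X] (h : SimulableWith M N) (hM : 0 < M)
    (hc : Real.logb 2 M ≤ c) : IsSimulation c N := by
  obtain ⟨K, _, PK, E, D, hPK, hE, hD, hN⟩ := h
  let e := (Fintype.equivFin K).symm
  refine ⟨Fintype.card K, M, fun k => PK (e k), fun x k => E x (e k), fun j k => D j (e k), hM, hc,
    (e.sum_comp PK).trans hPK, fun x k => hE x _, fun j k => hD j _, fun x y => ?_⟩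
  rw [hN, ← e.sum_comp]

lemma simulableWith_one (hQ : IsDist Q) : SimulableWith 1 fun _ : X => Q :=
  ⟨PUnit, inferInstance, fun _ => 1, fun _ _ _ => 1, fun _ _ => Q, by simp [IsDist],
    fun _ _ => by simp [IsDist], fun _ _ => hQ, fun _ _ => by simp⟩

/-- The shared sample from `Q` is accepted with probability `a x`, and announced by the extra
message; upon rejection the given simulation is run. -/
lemma SimulableWith.succ (h : SimulableWith M N) (hQ : IsDist Q) (ha : ∀ x y, a x y ≤ 1) :
    SimulableWith (M + 1) fun x y => Q y * a x y + (∑ z, Q z * (1 - a x z)) * N x y := by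
  obtain ⟨K, _, PK, E, D, hPK, hE, hD, hN⟩ := h
  refine ⟨Y × K, inferInstance, fun k => Q k.1 * PK k.2,
    fun x k => Fin.cons (a x k.1) fun j => (1 - a x k.1) * E x k.2 j,
    fun j k => Fin.cons (α := fun _ => Y → ℝ≥0∞) (fun y => if k.1 = y then 1 else 0)
      (fun j => D j k.2) j, ?_, fun x k => ?_,
    fun j k => ?_, fun x y => ?_⟩
  · rw [IsDist, Fintype.sum_prod_type, ← Finset.sum_mul_sum, show ∑ y, Q y = 1 from hQ,
      show ∑ k, PK k = 1 from hPK, one_mul]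
  · rw [IsDist, Fin.sum_univ_succ]
    simp only [Fin.cons_zero, Fin.cons_succ, ← Finset.mul_sum, show ∑ j, E x k.2 j = 1 from hE x _,
      mul_one, add_tsub_cancel_of_le (ha x k.1)]
  · cases j using Fin.cases with
    | zero => simp only [IsDist, Fin.cons_zero, Finset.sum_ite_eq, Finset.mem_univ, if_true]
    | succ j => simpa only [IsDist, Fin.cons_succ] using hD j k.2
  · have haccept : ∑ z, ∑ k, Q z * PK k * a x z * (if z = y then 1 else 0) = Q y * a x y := by
      simp only [mul_ite, mul_one, mul_zero, mul_right_comm _ (PK _) (a x _)]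
      rw [Finset.sum_comm]
      simp only [Finset.sum_ite_eq', Finset.mem_univ, if_true, ← Finset.mul_sum,
        show ∑ k, PK k = 1 from hPK, mul_one]
    have hreject : ∑ z, ∑ k, ∑ j, Q z * PK k * ((1 - a x z) * E x k j) * D j k y =
        (∑ z, Q z * (1 - a x z)) * N x y := by
      rw [Finset.sum_mul]
      refine Finset.sum_congr rfl fun z _ => ?_
      simp only [hN, Finset.mul_sum]
      exact Finset.sum_congr rfl fun k _ => Finset.sum_congr rfl fun j _ => by ring
    simp only [Fintype.sum_prod_type, Fin.sum_univ_succ, Fin.cons_zero, Fin.cons_succ,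
      Finset.sum_add_distrib, haccept, hreject]

lemma exists_simulableWith_one_sub_pow_mul_le (hQ : IsDist Q) (ha : ∀ x y, a x y ≤ 1)
    (hV : ∀ x y, (1 - ∑ z, Q z * (1 - a x z)) * V x y ≤ Q y * a x y) (M : ℕ) :
    ∃ N, SimulableWith (M + 1) N ∧
      ∀ x y, (1 - (∑ z, Q z * (1 - a x z)) ^ (M + 1)) * V x y ≤ N x y := by
  induction M with
  | zero =>
    refine ⟨_, simulableWith_one hQ, fun x y => ?_⟩
    rw [zero_add, pow_one]
    exact (hV x y).trans (mul_le_of_le_one_right' (ha x y))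
  | succ M ih =>
    obtain ⟨N, hN, hNV⟩ := ih
    refine ⟨_, hN.succ hQ ha, fun x y => ?_⟩
    set p := ∑ z, Q z * (1 - a x z)
    have hp : p ≠ ⊤ := ENNReal.sum_ne_top.2 fun z _ =>
      ENNReal.mul_ne_top (hQ.ne_top z) (ENNReal.sub_ne_top ENNReal.one_ne_top)
    calc (1 - p ^ (M + 1 + 1)) * V x y
        ≤ ((1 - p) + (p - p ^ (M + 1 + 1))) * V x y := mul_le_mul_left tsub_le_tsub_add_tsub _
      _ = (1 - p) * V x y + p * ((1 - p ^ (M + 1)) * V x y) := by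
          rw [add_mul, ← mul_assoc, ENNReal.mul_sub fun _ _ => hp, mul_one, ← pow_succ']
      _ ≤ Q y * a x y + p * N x y := add_le_add (hV x y) (mul_le_mul_right (hNV x y) p)

lemma exists_simulableWith_le (hQ : IsDist Q) (hVQ : ∀ x y, V x y ≤ 2 ^ t * Q y)
    (hV1 : ∀ x, ∑ y, V x y ≤ 1) (M : ℕ) :
    ∃ N, SimulableWith (M + 1) N ∧
      ∀ x y, (1 - (1 - 2 ^ (-t) * ∑ z, V x z) ^ (M + 1)) * V x y ≤ N x y := by
  have hVQ' (x y) : 2 ^ (-t) * V x y ≤ Q y := by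
    calc 2 ^ (-t) * V x y ≤ 2 ^ (-t) * (2 ^ t * Q y) := mul_le_mul_right (hVQ x y) _
      _ = Q y := by rw [← mul_assoc, two_rpow_neg_mul_self, one_mul]
  let a : X → Y → ℝ≥0∞ := fun x y => 2 ^ (-t) * V x y / Q y
  have hQa (x y) : Q y * a x y = 2 ^ (-t) * V x y :=
    ENNReal.mul_div_cancel' (fun h => le_zero_iff.1 (h ▸ hVQ' x y)) fun h => absurd h (hQ.ne_top y)
  have ha (x y) : a x y ≤ 1 := ENNReal.div_le_of_le_mul (by rw [one_mul]; exact hVQ' x y)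
  have hsum (x) : ∑ y, Q y * (1 - a x y) + 2 ^ (-t) * ∑ y, V x y = 1 := by
    simp only [Finset.mul_sum, ← hQa, ← Finset.sum_add_distrib, ← mul_add,
      tsub_add_cancel_of_le (ha x _), mul_one]
    exact hQ
  have hreject (x) : 1 - 2 ^ (-t) * ∑ y, V x y = ∑ y, Q y * (1 - a x y) :=
    ENNReal.sub_eq_of_eq_add_rev
      (ne_top_of_le_ne_top ENNReal.one_ne_top (hsum x ▸ le_add_self)) (by rw [add_comm, hsum])
  have haccept (x) : 1 - ∑ y, Q y * (1 - a x y) ≤ 2 ^ (-t) := by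
    rw [tsub_le_iff_left]
    exact (hsum x).ge.trans (add_le_add_right (mul_le_of_le_one_right' (hV1 x)) _)
  simp only [hreject]
  exact exists_simulableWith_one_sub_pow_mul_le hQ ha
    (fun x y => hQa x y ▸ mul_le_mul_left (haccept x) _) M

/-- The number of proposals before the first accepted one is geometric with parameter at least
`2 ^ (-t) / 2`. -/
lemma exists_isSimulation_mul_le [Fintype X] (hQ : IsDist Q) (hVQ : ∀ x y, V x y ≤ 2 ^ t * Q y)
    (hV1 : ∀ x, ∑ y, V x y ≤ 1) (hV2 : ∀ x, 1 / 2 ≤ ∑ y, V x y) (hM : 0 < M)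
    (hc : Real.logb 2 M ≤ c) :
    ∃ N, IsSimulation c N ∧
      ∀ x y, (1 - ENNReal.ofReal (Real.exp (-(M / (2 * 2 ^ t))))) * V x y ≤ N x y := by
  obtain ⟨N, hN, hNV⟩ := exists_simulableWith_le hQ hVQ hV1 (M - 1)
  rw [Nat.sub_add_cancel hM] at hN hNV
  have hfail (x) : 1 - 2 ^ (-t) * ∑ y, V x y ≤ ENNReal.ofReal (Real.exp (-(1 / (2 * 2 ^ t)))) := by
    have hle : ENNReal.ofReal (1 / (2 * 2 ^ t)) ≤ 2 ^ (-t) * ∑ y, V x y := by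
      refine le_trans (le_of_eq ?_) (mul_le_mul_right (hV2 x) _)
      rw [two_rpow_eq_ofReal, Real.rpow_neg zero_le_two, ← ENNReal.ofReal_one,
        ← ENNReal.ofReal_ofNat 2, ← ENNReal.ofReal_div_of_pos two_pos,
        ← ENNReal.ofReal_mul (by positivity)]
      congr 1
      field_simp
    calc _ ≤ 1 - ENNReal.ofReal (1 / (2 * 2 ^ t)) := tsub_le_tsub_left hle 1
      _ = ENNReal.ofReal (1 - 1 / (2 * 2 ^ t)) := by
          rw [ENNReal.ofReal_sub _ (by positivity), ENNReal.ofReal_one]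
      _ ≤ _ := ENNReal.ofReal_le_ofReal (Real.one_sub_le_exp_neg _)
  refine ⟨N, hN.isSimulation hM hc, fun x y => le_trans ?_ (hNV x y)⟩
  gcongr
  calc _ ≤ ENNReal.ofReal (Real.exp (-(1 / (2 * 2 ^ t)))) ^ M := pow_le_pow_left' (hfail x) M
    _ = _ := by
      rw [← ENNReal.ofReal_pow (by positivity), ← Real.exp_nat_mul]
      ring_nf

end RejectionSampling

section Achievability

variable {ι X Y : Type*} [Fintype ι] [Fintype X] [Fintype Y] {W : X → Y → ℝ≥0∞} {Q : Y → ℝ≥0∞}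
  {α : ℝ≥0∞} {r s ε b : ℝ}

lemma tendsto_two_rpow_natCast_mul {t : ℝ} (ht : 0 < t) :
    Tendsto (fun n : ℕ => (2 : ℝ) ^ (n * t)) atTop atTop :=
  (tendsto_rpow_atTop_of_base_gt_one 2 one_lt_two).comp
    (tendsto_natCast_atTop_atTop.atTop_mul_const ht)

lemma eventually_exists_messages (hr : 0 ≤ r) (hsr : s < r) (hε : 0 < ε) :
    ∀ᶠ n : ℕ in atTop, ∃ M : ℕ, 0 < M ∧ Real.logb 2 M ≤ n * r ∧
      Real.exp (-(M / (2 * 2 ^ (n * s)))) ≤ ε := by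
  filter_upwards [(tendsto_two_rpow_natCast_mul (sub_pos.2 hsr)).eventually_ge_atTop
    (4 * (-Real.log ε))] with n hn
  have hone : (1 : ℝ) ≤ 2 ^ (n * r) := Real.one_le_rpow one_le_two (by positivity)
  have hM : 0 < ⌊(2 : ℝ) ^ (n * r)⌋₊ := Nat.floor_pos.2 hone
  refine ⟨⌊(2 : ℝ) ^ (n * r)⌋₊, hM, ?_, ?_⟩
  · rw [Real.logb_le_iff_le_rpow one_lt_two (by exact_mod_cast hM)]
    exact Nat.floor_le (by positivity)
  · have hfloor : (2 : ℝ) ^ (n * r) / 2 ≤ ⌊(2 : ℝ) ^ (n * r)⌋₊ := by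
      have hM1 : (1 : ℝ) ≤ ⌊(2 : ℝ) ^ (n * r)⌋₊ := by exact_mod_cast hM
      linarith [Nat.lt_floor_add_one ((2 : ℝ) ^ (n * r))]
    have hsplit : (2 : ℝ) ^ (n * (r - s)) * 2 ^ (n * s) = 2 ^ (n * r) := by
      rw [← Real.rpow_add two_pos]; ring_nf
    have hdiv : (2 : ℝ) ^ (n * (r - s)) / 4 ≤ ⌊(2 : ℝ) ^ (n * r)⌋₊ / (2 * 2 ^ (n * s)) := by
      rw [le_div_iff₀ (by positivity)]
      linarith
    rw [← Real.le_log_iff_exp_le hε]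
    linarith

lemma eventually_exists_isSimulation (hQ : IsDist Q) (hr : 0 ≤ r) (hsr : s < r) (hε : 0 < ε) :
    ∀ᶠ n : ℕ in atTop, ∀ V : (Fin n → X) → (Fin n → Y) → ℝ≥0∞,
      (∀ xs ys, V xs ys ≤ 2 ^ (n * s) * prodDist n Q ys) → (∀ xs, ∑ ys, V xs ys ≤ 1) →
      (∀ xs, 1 / 2 ≤ ∑ ys, V xs ys) →
      ∃ N, IsSimulation (n * r) N ∧ ∀ xs ys, V xs ys ≤ 2 ^ ε * N xs ys := by
  have hε1 : (2 : ℝ) ^ (-ε) < 1 := Real.rpow_lt_one_of_one_lt_of_neg one_lt_two (neg_neg_of_pos hε)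
  filter_upwards [eventually_exists_messages hr hsr (sub_pos.2 hε1)]
    with n ⟨M, hM, hc, hexp⟩ V hVQ hV1 hV2
  obtain ⟨N, hN, hVN⟩ := exists_isSimulation_mul_le (isDist_prodDist hQ n) hVQ hV1 hV2 hM hc
  refine ⟨N, hN, fun xs ys => ?_⟩
  have hle : (2 : ℝ≥0∞) ^ (-ε) ≤ 1 - ENNReal.ofReal (Real.exp (-(M / (2 * 2 ^ (n * s))))) := by
    rw [← ENNReal.ofReal_one, ← ENNReal.ofReal_sub _ (by positivity), two_rpow_eq_ofReal]
    exact ENNReal.ofReal_le_ofReal (by linarith)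
  calc V xs ys = 2 ^ ε * (2 ^ (-ε) * V xs ys) := by
        rw [← mul_assoc, mul_comm (2 ^ ε), two_rpow_neg_mul_self, one_mul]
    _ ≤ 2 ^ ε * N xs ys := by
        gcongr
        exact (mul_le_mul_left hle _).trans (hVN xs ys)

lemma Rrst_le_of_dominated [Nonempty X] (hW : IsChannel W) (hQ : IsDist Q) (hr : 0 ≤ r)
    (hsr : s < r)
    (h : ∀ ε : ℝ, 0 < ε → ∀ᶠ n : ℕ in atTop, ∃ V : (Fin n → X) → (Fin n → Y) → ℝ≥0∞,
      (∀ xs ys, V xs ys ≤ 2 ^ (n * s) * prodDist n Q ys) ∧ (∀ xs, ∑ ys, V xs ys ≤ 1) ∧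
      (∀ xs, 1 / 2 ≤ ∑ ys, V xs ys) ∧ ∀ xs, renyiD α (prodCh n W xs) (V xs) ≤ ε) :
    Rrst α W ≤ r := by
  refine Rrst_le hW hr fun ε hε => ?_
  filter_upwards [eventually_exists_isSimulation (X := X) hQ hr hsr (half_pos hε),
    h (ε / 2) (half_pos hε)] with n hsim ⟨V, hVQ, hV1, hV2, hV⟩
  obtain ⟨N, hN, hVN⟩ := hsim V hVQ hV1 hV2
  refine ⟨N, hN, fun xs => ?_⟩
  have hle := renyiD_le_add_of_le α (isChannel_prodCh hW n xs) (hVN xs) (hV xs)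
  rwa [add_halves] at hle

lemma prodCh_le {V : X → Y → ℝ≥0∞} (h : ∀ x y, V x y ≤ 2 ^ s * Q y) (n : ℕ) (xs : Fin n → X)
    (ys : Fin n → Y) : prodCh n V xs ys ≤ 2 ^ (n * s) * prodDist n Q ys :=
  calc prodCh n V xs ys ≤ ∏ i, (2 ^ s * Q (ys i)) := Finset.prod_le_prod' fun i _ => h _ _
    _ = _ := by
      rw [Finset.prod_mul_distrib, Finset.prod_const, Finset.card_univ, Fintype.card_fin,
        mul_comm (n : ℝ), ENNReal.rpow_mul, ENNReal.rpow_natCast, prodDist]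

lemma Rrst_top_le [Nonempty X] (hW : IsChannel W) (hQ : IsDist Q) (hr : 0 ≤ r) (hsr : s < r)
    (h : ∀ x, renyiD ⊤ (W x) Q ≤ s) : Rrst ⊤ W ≤ r := by
  refine Rrst_le_of_dominated hW hQ hr hsr fun ε hε => Eventually.of_forall fun n =>
    ⟨prodCh n W, prodCh_le (fun x => renyiD_top_le_iff.1 (h x)) n,
      fun xs => (isChannel_prodCh hW n xs).le, fun xs => ?_,
      fun xs => renyiD_top_le_iff.2 fun ys => ?_⟩
  · rw [isChannel_prodCh hW n xs, one_div]
    exact ENNReal.inv_le_one.2 one_le_two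
  · exact le_mul_of_one_le_left' (ENNReal.one_le_rpow one_le_two hε)

lemma exists_dist_le_of_renyiD_zero_le {P Q : ι → ℝ≥0∞} (hQ : IsDist Q) (h : renyiD 0 P Q ≤ s) :
    ∃ V : ι → ℝ≥0∞, IsDist V ∧ (∀ y, V y ≤ 2 ^ s * Q y) ∧ ∀ y, V y ≠ 0 → P y ≠ 0 := by
  set S := ∑ y ∈ Finset.univ.filter fun y => P y ≠ 0, Q y
  have hsS : 2 ^ (-s) ≤ S := renyiD_zero_le_iff.1 h
  have hS0 : S ≠ 0 := ((two_rpow_pos _).trans_le hsS).ne'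
  have hStop : S ≠ ⊤ := ENNReal.sum_ne_top.2 fun y _ => hQ.ne_top y
  have hSinv : S⁻¹ ≤ 2 ^ s := by
    rw [ENNReal.inv_le_iff_inv_le, ← ENNReal.rpow_neg]
    exact hsS
  refine ⟨fun y => S⁻¹ * if P y ≠ 0 then Q y else 0, ?_, fun y => ?_, fun y => ?_⟩
  · rw [IsDist, ← Finset.mul_sum, ← Finset.sum_filter, ENNReal.inv_mul_cancel hS0 hStop]
  · exact mul_le_mul' hSinv (by split_ifs <;> simp)
  · exact mt fun hy => by simp [hy]

lemma Rrst_zero_le [Nonempty X] (hW : IsChannel W) (hQ : IsDist Q) (hr : 0 ≤ r) (hsr : s < r)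
    (h : ∀ x, renyiD 0 (W x) Q ≤ s) : Rrst 0 W ≤ r := by
  choose V hV hVQ hVW using fun x => exists_dist_le_of_renyiD_zero_le hQ (h x)
  refine Rrst_le_of_dominated hW hQ hr hsr fun ε hε => Eventually.of_forall fun n =>
    ⟨prodCh n V, prodCh_le hVQ n, fun xs => (isChannel_prodCh hV n xs).le, fun xs => ?_,
      fun xs => renyiD_zero_le_iff.2 ?_⟩
  · rw [isChannel_prodCh hV n xs, one_div]
    exact ENNReal.inv_le_one.2 one_le_two
  · have hsupp (ys) (hys : prodCh n V xs ys ≠ 0) : prodCh n W xs ys ≠ 0 := by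
      rw [prodCh, Finset.prod_ne_zero_iff] at hys ⊢
      exact fun i hi => hVW _ _ (hys i hi)
    rw [Finset.sum_filter_of_ne fun ys _ => hsupp ys, isChannel_prodCh hV n xs]
    exact ENNReal.rpow_le_one_of_one_le_of_neg one_le_two (neg_neg_of_pos hε)

lemma renyiSum_prod (hb : 0 ≤ b) (hQ : IsDist Q) (n : ℕ) (xs : Fin n → X) :
    renyiSum b (prodCh n W xs) (prodDist n Q) = ∏ i, renyiSum b (W (xs i)) Q := by
  simp only [renyiSum, Fintype.prod_sum fun (i : Fin n) y => W (xs i) y ^ b * Q y ^ (1 - b), prodCh,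
    prodDist, Finset.prod_mul_distrib, ENNReal.prod_rpow_of_nonneg hb,
    ENNReal.prod_rpow_of_ne_top fun _ _ => hQ.ne_top _]

lemma renyiSum_min_le {P : ι → ℝ≥0∞} (hb : 1 < b) (hP : IsDist P) (T : ι → ℝ≥0∞) :
    renyiSum b P (fun x => min (P x) (T x)) ≤ 1 + renyiSum b P T := by
  rw [← show ∑ x, P x = 1 from hP, renyiSum, renyiSum, ← Finset.sum_add_distrib]
  refine Finset.sum_le_sum fun x _ => ?_
  rcases le_total (P x) (T x) with h | h
  · rw [min_eq_left h, rpow_mul_rpow_one_sub (by linarith) (hP.ne_top x)]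
    exact le_self_add
  · rw [min_eq_right h]
    exact le_add_self

lemma one_le_sum_min_add_renyiSum {P : ι → ℝ≥0∞} (hb : 1 < b) (hP : IsDist P) (T : ι → ℝ≥0∞) :
    1 ≤ ∑ x, min (P x) (T x) + renyiSum b P T := by
  rw [← show ∑ x, P x = 1 from hP, renyiSum, ← Finset.sum_add_distrib]
  refine Finset.sum_le_sum fun x _ => ?_
  rcases le_total (P x) (T x) with h | h
  · rw [min_eq_left h]
    exact le_self_add
  · calc P x = P x ^ b * P x ^ (1 - b) :=
          (rpow_mul_rpow_one_sub (by linarith) (hP.ne_top x)).symm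
      _ ≤ P x ^ b * T x ^ (1 - b) := mul_le_mul_right (rpow_one_sub_anti hb h) _
      _ ≤ _ := le_add_self

lemma renyiSum_prod_two_rpow_mul_le (hb : 1 < b) (hQ : IsDist Q)
    (h : ∀ x, renyiSum b (W x) Q ≤ 2 ^ ((b - 1) * s)) (t : ℝ) (n : ℕ) (xs : Fin n → X) :
    renyiSum b (prodCh n W xs) (fun ys => 2 ^ (n * t) * prodDist n Q ys) ≤
      2 ^ (-(n * ((b - 1) * (t - s)))) := by
  calc _ = 2 ^ (n * t * (1 - b)) * ∏ i, renyiSum b (W (xs i)) Q := by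
        rw [renyiSum_two_rpow_mul, renyiSum_prod (by linarith) hQ]
    _ ≤ 2 ^ (n * t * (1 - b)) * ∏ _i : Fin n, 2 ^ ((b - 1) * s) := by
        gcongr
        exact h _
    _ = _ := by
        rw [Finset.prod_const, Finset.card_univ, Fintype.card_fin, ← ENNReal.rpow_natCast,
          ← ENNReal.rpow_mul, ← two_rpow_add]
        ring_nf

/-- The channel is truncated at `2 ^ (n * t) * Qⁿ` with `s < t < r`, which costs vanishing mass. -/
lemma Rrst_le_of_one_lt [Nonempty X] (hb : 1 < b) (hW : IsChannel W) (hQ : IsDist Q) (hr : 0 ≤ r)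
    (hsr : s < r) (h : ∀ x, renyiD (ENNReal.ofReal b) (W x) Q ≤ s) :
    Rrst (ENNReal.ofReal b) W ≤ r := by
  obtain ⟨t, hst, htr⟩ := exists_between hsr
  have hrate : 0 < (b - 1) * (t - s) := mul_pos (by linarith) (by linarith)
  refine Rrst_le_of_dominated hW hQ hr htr fun ε hε => ?_
  have hε1 : (1 : ℝ) < 2 ^ ((b - 1) * ε) := Real.one_lt_rpow one_lt_two (mul_pos (by linarith) hε)
  have hu : 0 < min (1 / 2 : ℝ) (2 ^ ((b - 1) * ε) - 1) := lt_min (by positivity) (by linarith)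
  filter_upwards [(tendsto_two_rpow_natCast_mul hrate).eventually_ge_atTop
    (min (1 / 2) (2 ^ ((b - 1) * ε) - 1))⁻¹] with n hn
  have htail (xs : Fin n → X) :
      renyiSum b (prodCh n W xs) (fun ys => 2 ^ (n * t) * prodDist n Q ys) ≤
        ENNReal.ofReal (min (1 / 2) (2 ^ ((b - 1) * ε) - 1)) := by
    refine (renyiSum_prod_two_rpow_mul_le hb hQ
      (fun x => (renyiD_le_iff_of_one_lt hb).1 (h x)) t n xs).trans ?_
    rw [two_rpow_eq_ofReal, Real.rpow_neg zero_le_two]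
    exact ENNReal.ofReal_le_ofReal (inv_le_of_inv_le₀ hu hn)
  refine ⟨fun xs ys => min (prodCh n W xs ys) (2 ^ (n * t) * prodDist n Q ys),
    fun _ _ => min_le_right _ _, fun xs => ?_, fun xs => ?_, fun xs => ?_⟩
  · exact (Finset.sum_le_sum fun _ _ => min_le_left _ _).trans (isChannel_prodCh hW n xs).le
  · have hhalf := (htail xs).trans (ENNReal.ofReal_le_ofReal (min_le_left _ _))
    rw [ENNReal.ofReal_div_of_pos two_pos, ENNReal.ofReal_one, ENNReal.ofReal_ofNat] at hhalf
    have hmass := one_le_sum_min_add_renyiSum hb (isChannel_prodCh hW n xs)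
      fun ys => 2 ^ (n * t) * prodDist n Q ys
    rw [← ENNReal.add_halves 1] at hmass
    exact (ENNReal.add_le_add_iff_right (by simp)).1 (hmass.trans (add_le_add_right hhalf _))
  · rw [renyiD_le_iff_of_one_lt hb]
    refine (renyiSum_min_le hb (isChannel_prodCh hW n xs) _).trans ?_
    refine (add_le_add_right
      ((htail xs).trans (ENNReal.ofReal_le_ofReal (min_le_right _ _))) 1).trans ?_
    rw [two_rpow_eq_ofReal, ← ENNReal.ofReal_one, ← ENNReal.ofReal_add zero_le_one (by linarith),
      add_sub_cancel]

end Achievability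

section Minimax

lemma exists_forall_lt_of_forall_exists_sum_lt {ι E : Type*} [Fintype ι] [Nonempty ι]
    [AddCommGroup E] [Module ℝ E] [TopologicalSpace E] [IsTopologicalAddGroup E]
    [ContinuousSMul ℝ E] {K : Set E} {f : ι → E → ℝ} {t : ℝ} (hf : ∀ i, ConvexOn ℝ K (f i))
    (hc : ∀ i, ContinuousOn (f i) K)
    (h : ∀ p ∈ stdSimplex ℝ ι, ∃ q ∈ K, ∑ i, p i * f i q < t) : ∃ q ∈ K, ∀ i, f i q < t := by
  have hlin (q : E) : IsLinearMap ℝ fun p : ι → ℝ => ∑ i, p i * f i q :=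
    ⟨fun p p' => by simp only [Pi.add_apply, add_mul, Finset.sum_add_distrib],
      fun c p => by simp only [Pi.smul_apply, smul_eq_mul, mul_assoc, Finset.mul_sum]⟩
  have hcont (q : E) : Continuous fun p : ι → ℝ => ∑ i, p i * f i q := by fun_prop
  obtain ⟨F, hF⟩ := (isCompact_stdSimplex ℝ ι).elim_finite_subcover
    (fun q : K => {p | ∑ i, p i * f i q < t}) (fun q => isOpen_lt (hcont q) continuous_const)
    fun p hp => by
      obtain ⟨q, hq, hpq⟩ := h p hp
      exact Set.mem_iUnion.2 ⟨⟨q, hq⟩, hpq⟩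
  have hconv (p) (hp : p ∈ stdSimplex ℝ ι) : ConvexOn ℝ K fun q => ∑ i, p i * f i q := by
    refine ⟨(hf (Classical.arbitrary ι)).1, fun q hq q' hq' a b ha hb hab => ?_⟩
    simp only [smul_eq_mul, Finset.mul_sum, ← Finset.sum_add_distrib]
    refine Finset.sum_le_sum fun i _ =>
      (mul_le_mul_of_nonneg_left ((hf i).2 hq hq' ha hb hab) (hp.1 i)).trans_eq ?_
    simp only [smul_eq_mul]
    ring
  obtain ⟨q, hq, hlt⟩ := Sion.exists_lt_iInf_of_lt_iInf_of_finite
    (X := stdSimplex ℝ ι) (Y := K) (f := fun p q => -∑ i, p i * f i q) (t := -t)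
    ⟨_, single_mem_stdSimplex ℝ (Classical.arbitrary ι)⟩ (isCompact_stdSimplex ℝ ι)
    (fun q _ => (hcont q).neg.lowerSemicontinuous.lowerSemicontinuousOn _)
    (fun q _ => (((hlin q).mk' _).concaveOn (convex_stdSimplex ℝ ι)).neg.quasiconvexOn)
    (hf (Classical.arbitrary ι)).1
    (fun p _ => (continuousOn_finsetSum _ fun i _ =>
      continuousOn_const.mul (hc i)).neg.upperSemicontinuousOn)
    (fun p hp => (hconv p hp).neg.quasiconcaveOn) (convex_stdSimplex ℝ ι)
    (F.finite_toSet.image Subtype.val) (by simp) fun p hp => by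
      obtain ⟨q, hqF, hq⟩ := Set.mem_iUnion₂.1 (hF hp)
      exact ⟨q, ⟨q, hqF, rfl⟩, neg_lt_neg hq⟩
  refine ⟨q, hq, fun i => ?_⟩
  simpa [Pi.single_apply] using hlt _ (single_mem_stdSimplex ℝ i)

variable {X Y : Type*} [Fintype X] [Fintype Y] {W : X → Y → ℝ≥0∞} {α : ℝ≥0∞} {s t : ℝ}

/-- Probability vectors without zero entries. -/
def openSimplex (Y : Type*) [Fintype Y] : Set (Y → ℝ) :=
  stdSimplex ℝ Y ∩ Set.univ.pi fun _ => Set.Ioi 0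

lemma convex_openSimplex (Y : Type*) [Fintype Y] : Convex ℝ (openSimplex Y) :=
  (convex_stdSimplex ℝ Y).inter (convex_pi fun _ _ => convex_Ioi 0)

lemma isDist_ofReal {p : X → ℝ} (hp : p ∈ stdSimplex ℝ X) :
    IsDist fun x => ENNReal.ofReal (p x) := by
  rw [IsDist, ← ENNReal.ofReal_sum_of_nonneg fun x _ => hp.1 x, hp.2, ENNReal.ofReal_one]

lemma exists_openSimplex_two_rpow_neg_mul_le {Q : Y → ℝ≥0∞} (hQ : IsDist Q) (ht : 0 < t) :
    ∃ q ∈ openSimplex Y, ∀ y, 2 ^ (-t) * Q y ≤ ENNReal.ofReal (q y) := by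
  have hcard : (0 : ℝ) < Fintype.card Y := by
    obtain ⟨y, -, -⟩ := Finset.exists_ne_zero_of_sum_ne_zero (hQ.trans_ne one_ne_zero)
    exact_mod_cast Fintype.card_pos_iff.2 ⟨y⟩
  set θ : ℝ := 2 ^ (-t)
  have hθ0 : 0 < θ := by positivity
  have hθ1 : θ < 1 := Real.rpow_lt_one_of_one_lt_of_neg one_lt_two (neg_neg_of_pos ht)
  have hunif : 0 < (1 - θ) / Fintype.card Y := div_pos (by linarith) hcard
  have hpos (y) : 0 < θ * (Q y).toReal + (1 - θ) / Fintype.card Y :=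
    add_pos_of_nonneg_of_pos (by positivity) hunif
  refine ⟨_, ⟨⟨fun y => (hpos y).le, ?_⟩, fun y _ => hpos y⟩, fun y => ?_⟩
  · rw [Finset.sum_add_distrib, ← Finset.mul_sum, hQ.sum_toReal, Finset.sum_const,
      Finset.card_univ, nsmul_eq_mul]
    field_simp
    ring
  · rw [ENNReal.ofReal_add (by positivity) hunif.le, ENNReal.ofReal_mul hθ0.le,
      ENNReal.ofReal_toReal (hQ.ne_top y), two_rpow_eq_ofReal]
    exact le_self_add

lemma isDist_joint {P : X → ℝ≥0∞} (hP : IsDist P) (hW : IsChannel W) : IsDist (joint P W) := by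
  rw [IsDist, Fintype.sum_prod_type]
  exact (Finset.sum_congr rfl fun x _ => congrFun (margX_joint hW P) x).trans hP

lemma exists_openSimplex_renyiD_joint_lt {P : X → ℝ≥0∞} (hP : IsDist P) (hW : IsChannel W)
    (h : renyiCap α W < s) :
    ∃ q ∈ openSimplex Y,
      renyiD α (joint P W) (fun z => P z.1 * ENNReal.ofReal (q z.2)) < s := by
  have hMI : renyiMI α (joint P W) < s :=
    (le_iSup (fun P : {P : X → ℝ≥0∞ // IsDist P} => renyiMI α (joint P.1 W)) ⟨P, hP⟩).trans_lt h
  simp only [renyiMI, margX_joint hW, iInf_lt_iff] at hMI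
  obtain ⟨⟨Q, hQ⟩, hQs⟩ := hMI
  obtain ⟨e, hQe, hes⟩ := EReal.lt_iff_exists_real_btwn.1 hQs
  have hes' : e < s := EReal.coe_lt_coe_iff.1 hes
  obtain ⟨q, hq, hqQ⟩ := exists_openSimplex_two_rpow_neg_mul_le hQ (half_pos (sub_pos.2 hes'))
  refine ⟨q, hq, (renyiD_le_add_of_le (c := (s - e) / 2) α (isDist_joint hP hW)
    (fun z => ?_) hQe.le).trans_lt (EReal.coe_lt_coe_iff.2 (by linarith))⟩
  calc P z.1 * Q z.2 = 2 ^ ((s - e) / 2) * (P z.1 * (2 ^ (-((s - e) / 2)) * Q z.2)) := by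
        rw [mul_left_comm (P z.1), ← mul_assoc, mul_comm (2 ^ _), two_rpow_neg_mul_self, one_mul]
    _ ≤ _ := mul_le_mul_right (mul_le_mul_right (hqQ z.2) _) _

lemma exists_openSimplex_forall_sum_lt [Nonempty X] (hW : IsChannel W) (h : renyiCap α W < s)
    {g : X → Y → ℝ → ℝ} (hg : ∀ x y, ConvexOn ℝ (Set.Ioi 0) (g x y))
    (hD : ∀ p ∈ stdSimplex ℝ X, ∀ q ∈ openSimplex Y,
      renyiD α (joint (fun x => ENNReal.ofReal (p x)) W)
        (fun z => ENNReal.ofReal (p z.1) * ENNReal.ofReal (q z.2)) < s →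
      ∑ x, p x * ∑ y, g x y (q y) < t) :
    ∃ q ∈ openSimplex Y, ∀ x, ∑ y, g x y (q y) < t := by
  refine exists_forall_lt_of_forall_exists_sum_lt (fun x => ⟨convex_openSimplex Y, ?_⟩)
    (fun x => continuousOn_finsetSum _ fun y _ => ((hg x y).continuousOn isOpen_Ioi).comp
      (continuous_apply y).continuousOn fun q hq => hq.2 y trivial) fun p hp => ?_
  · intro q hq q' hq' a b ha hb hab
    simp only [smul_eq_mul, Finset.mul_sum, ← Finset.sum_add_distrib]
    exact Finset.sum_le_sum fun y _ => (hg x y).2 (hq.2 y trivial) (hq'.2 y trivial) ha hb hab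
  · obtain ⟨q, hq, hqs⟩ := exists_openSimplex_renyiD_joint_lt (isDist_ofReal hp) hW h
    exact ⟨q, hq, hD p hp q hq hqs⟩

end Minimax

section OptimalOutput

variable {X Y : Type*} [Fintype X] [Fintype Y] {W : X → Y → ℝ≥0∞} {a s : ℝ}

lemma convexOn_rpow_of_nonpos {r : ℝ} (hr : r ≤ 0) :
    ConvexOn ℝ (Set.Ioi 0) fun t : ℝ => t ^ r := by
  have hlog : ConvexOn ℝ (Set.Ioi 0) fun t : ℝ => (-r) • -Real.log t :=
    strictConcaveOn_log_Ioi.concaveOn.neg.smul (neg_nonneg.2 hr)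
  have hexp : ConvexOn ℝ (Set.Ioi 0) fun t : ℝ => Real.exp ((-r) • -Real.log t) :=
    ⟨hlog.1, fun t ht u hu a b ha hb hab => (Real.exp_le_exp.2 (hlog.2 ht hu ha hb hab)).trans
      (convexOn_exp.2 trivial trivial ha hb hab)⟩
  exact hexp.congr fun t ht => by simp [Real.rpow_def_of_pos ht, mul_comm]

lemma convexOn_mul_logb_div {w : ℝ} (hw : 0 ≤ w) :
    ConvexOn ℝ (Set.Ioi 0) fun t : ℝ => w * Real.logb 2 (w / t) := by
  rcases hw.eq_or_lt with rfl | hw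
  · simpa using convexOn_const 0 (convex_Ioi 0)
  have hlog : ConvexOn ℝ (Set.Ioi 0) fun t : ℝ => (w / Real.log 2) • (-Real.log t + Real.log w) :=
    (strictConcaveOn_log_Ioi.concaveOn.neg.add_const _).smul
      (div_pos hw (Real.log_pos one_lt_two)).le
  refine hlog.congr fun t ht => ?_
  simp only [smul_eq_mul, Real.logb, Real.log_div hw.ne' (ne_of_gt ht)]
  ring

lemma renyiSum_ofReal (h0 : 0 ≤ a) {P : Y → ℝ≥0∞} (hP : ∀ y, P y ≠ ⊤) {q : Y → ℝ}
    (hq : ∀ y, 0 < q y) : renyiSum a P (fun y => ENNReal.ofReal (q y)) =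
      ENNReal.ofReal (∑ y, (P y).toReal ^ a * q y ^ (1 - a)) := by
  rw [ENNReal.ofReal_sum_of_nonneg fun y _ =>
    mul_nonneg (by positivity) (Real.rpow_nonneg (hq y).le _)]
  refine Finset.sum_congr rfl fun y _ => ?_
  rw [ENNReal.ofReal_mul (by positivity), ← ENNReal.ofReal_rpow_of_nonneg ENNReal.toReal_nonneg h0,
    ENNReal.ofReal_toReal (hP y), ENNReal.ofReal_rpow_of_pos (hq y)]

lemma sum_ofReal_mul_ofReal {p f : X → ℝ} (hp : ∀ x, 0 ≤ p x) (hf : ∀ x, 0 ≤ f x) :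
    ∑ x, ENNReal.ofReal (p x) * ENNReal.ofReal (f x) = ENNReal.ofReal (∑ x, p x * f x) := by
  rw [ENNReal.ofReal_sum_of_nonneg fun x _ => mul_nonneg (hp x) (hf x)]
  exact Finset.sum_congr rfl fun x _ => (ENNReal.ofReal_mul (hp x)).symm

lemma exists_dist_of_renyiCap_lt_of_one_lt [Nonempty X] (h1 : 1 < a) (hW : IsChannel W)
    (h : renyiCap (ENNReal.ofReal a) W < s) :
    ∃ Q, IsDist Q ∧ ∀ x, renyiD (ENNReal.ofReal a) (W x) Q ≤ s := by
  have h0 : 0 < a := zero_lt_one.trans h1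
  have hsum (x) {q : Y → ℝ} (hq : q ∈ openSimplex Y) :
      renyiSum a (W x) (fun y => ENNReal.ofReal (q y)) =
        ENNReal.ofReal (∑ y, (W x y).toReal ^ a * q y ^ (1 - a)) :=
    renyiSum_ofReal h0.le (IsDist.ne_top (hW x)) fun y => hq.2 y trivial
  obtain ⟨q, hq, hlt⟩ := exists_openSimplex_forall_sum_lt (t := 2 ^ ((a - 1) * s)) hW h
    (g := fun x y t => (W x y).toReal ^ a * t ^ (1 - a))
    (fun x y => (convexOn_rpow_of_nonpos (by linarith)).smul (by positivity))
    fun p hp q hq hD => by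
      rw [← not_le, le_renyiD_iff_of_one_lt h1, not_le,
        renyiSum_joint h0 (isDist_ofReal hp) W fun y => ENNReal.ofReal (q y),
        ← sum_mul_renyiSum h0.ne', two_rpow_eq_ofReal] at hD
      simp only [hsum _ hq] at hD
      rw [sum_ofReal_mul_ofReal hp.1 fun x => Finset.sum_nonneg fun y _ =>
        mul_nonneg (by positivity) (Real.rpow_nonneg (hq.1.1 y) _)] at hD
      exact lt_of_not_ge fun hge => hD.not_ge (ENNReal.ofReal_le_ofReal hge)
  refine ⟨_, isDist_ofReal hq.1, fun x => (renyiD_le_iff_of_one_lt h1).2 ?_⟩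
  rw [hsum x hq, two_rpow_eq_ofReal]
  exact ENNReal.ofReal_le_ofReal (hlt x).le

lemma klSum_ofReal (P : Y → ℝ≥0∞) {q : Y → ℝ} (hq : q ∈ openSimplex Y) :
    klSum P (fun y => ENNReal.ofReal (q y)) =
      ∑ y, (P y).toReal * Real.logb 2 ((P y).toReal / q y) := by
  simp only [klSum, ENNReal.toReal_ofReal (hq.1.1 _)]

lemma exists_dist_of_renyiCap_one_lt [Nonempty X] (hW : IsChannel W) (h : renyiCap 1 W < s) :
    ∃ Q, IsDist Q ∧ (∀ y, Q y ≠ 0) ∧ ∀ x, klSum (W x) Q < s := by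
  have hpos {q : Y → ℝ} (hq : q ∈ openSimplex Y) (y) : ENNReal.ofReal (q y) ≠ 0 :=
    (ENNReal.ofReal_pos.2 (hq.2 y trivial)).ne'
  obtain ⟨q, hq, hlt⟩ := exists_openSimplex_forall_sum_lt (t := s) hW h
    (g := fun x y t => (W x y).toReal * Real.logb 2 ((W x y).toReal / t))
    (fun x y => convexOn_mul_logb_div ENNReal.toReal_nonneg) fun p hp q hq hD => by
      rw [renyiD_one_joint (isDist_ofReal hp) hW (fun y => ENNReal.ofReal_ne_top)
        fun x y hy => absurd hy (hpos hq y), EReal.coe_lt_coe_iff] at hD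
      simpa only [klSum_ofReal _ hq, ENNReal.toReal_ofReal (hp.1 _)] using hD
  exact ⟨_, isDist_ofReal hq.1, hpos hq, fun x => (klSum_ofReal (W x) hq).trans_lt (hlt x)⟩

lemma sum_filter_ofReal (P : Y → ℝ≥0∞) {q : Y → ℝ} (hq : ∀ y, 0 ≤ q y) :
    ∑ y ∈ Finset.univ.filter fun y => P y ≠ 0, ENNReal.ofReal (q y) =
      ENNReal.ofReal (-∑ y, if P y ≠ 0 then -q y else 0) := by
  rw [← ENNReal.ofReal_sum_of_nonneg fun y _ => hq y, Finset.sum_filter, ← Finset.sum_neg_distrib]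
  simp only [neg_ite, neg_neg, neg_zero]

lemma sum_support_joint (P : X → ℝ≥0∞) (W : X → Y → ℝ≥0∞) (Q : Y → ℝ≥0∞) :
    ∑ z ∈ Finset.univ.filter fun z => joint P W z ≠ 0, P z.1 * Q z.2 =
      ∑ x, P x * ∑ y ∈ Finset.univ.filter fun y => W x y ≠ 0, Q y := by
  rw [Finset.sum_filter, Fintype.sum_prod_type]
  refine Finset.sum_congr rfl fun x _ => ?_
  rw [Finset.sum_filter, Finset.mul_sum]
  refine Finset.sum_congr rfl fun y _ => ?_
  by_cases hP : P x = 0 <;> simp [joint, hP]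

lemma exists_dist_of_renyiCap_zero_lt [Nonempty X] (hW : IsChannel W) (h : renyiCap 0 W < s) :
    ∃ Q, IsDist Q ∧ ∀ x, renyiD 0 (W x) Q ≤ s := by
  obtain ⟨q, hq, hlt⟩ := exists_openSimplex_forall_sum_lt (t := -2 ^ (-s)) hW h
    (g := fun x y t => if W x y ≠ 0 then -t else 0)
    (fun x y => by
      split_ifs
      · exact (concaveOn_id (convex_Ioi 0)).neg
      · exact convexOn_const 0 (convex_Ioi 0))
    fun p hp q hq hD => by
      rw [← not_le, le_renyiD_zero_iff, not_le,
        sum_support_joint (fun x => ENNReal.ofReal (p x)) W fun y => ENNReal.ofReal (q y),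
        two_rpow_eq_ofReal] at hD
      simp only [sum_filter_ofReal _ hq.1.1] at hD
      rw [sum_ofReal_mul_ofReal hp.1 fun x => neg_nonneg.2 <| Finset.sum_nonpos fun y _ => by
        split_ifs
        exacts [neg_nonpos.2 (hq.1.1 y), le_rfl]] at hD
      have hlt := lt_of_not_ge fun hge => hD.not_ge (ENNReal.ofReal_le_ofReal hge)
      simpa only [mul_neg, Finset.sum_neg_distrib, lt_neg] using hlt
  refine ⟨_, isDist_ofReal hq.1, fun x => renyiD_zero_le_iff.2 ?_⟩
  rw [sum_filter_ofReal _ hq.1.1, two_rpow_eq_ofReal]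
  exact ENNReal.ofReal_le_ofReal (le_neg.1 (hlt x).le)

lemma exists_dist_of_renyiCap_top_lt [Nonempty X] (hW : IsChannel W) (h : renyiCap ⊤ W < s) :
    ∃ Q, IsDist Q ∧ ∀ x, renyiD ⊤ (W x) Q ≤ s := by
  have hcard : (Fintype.card X : ℝ≥0∞) ≠ 0 := Nat.cast_ne_zero.2 Fintype.card_ne_zero
  have hunif : IsDist fun _ : X => (Fintype.card X : ℝ≥0∞)⁻¹ := by
    rw [IsDist, Finset.sum_const, Finset.card_univ, nsmul_eq_mul,
      ENNReal.mul_inv_cancel hcard (ENNReal.natCast_ne_top _)]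
  obtain ⟨q, hq, hlt⟩ := exists_openSimplex_renyiD_joint_lt hunif hW h
  refine ⟨_, isDist_ofReal hq.1, fun x => renyiD_top_le_iff.2 fun y => ?_⟩
  have hxy := renyiD_top_le_iff.1 hlt.le (x, y)
  rw [joint, mul_left_comm] at hxy
  exact (ENNReal.mul_le_mul_iff_right (ENNReal.inv_ne_zero.2 (ENNReal.natCast_ne_top _))
    (ENNReal.inv_ne_top.2 hcard)).1 hxy

end OptimalOutput

section SimulationRate

variable {X Y : Type*} [Fintype X] [Fintype Y] {W : X → Y → ℝ≥0∞} {α β : ℝ≥0∞} {a s : ℝ}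

lemma hasDerivAt_sum_mul_rpow_one {p q : Y → ℝ} (hp : ∀ y, 0 ≤ p y) (hq : ∀ y, 0 < q y) :
    HasDerivAt (fun b : ℝ => ∑ y, p y ^ b * q y ^ (1 - b))
      (∑ y, p y * Real.log (p y / q y)) 1 := by
  have hmul (y) (b : ℝ) : p y ^ b * q y ^ (1 - b) = q y * (p y / q y) ^ b := by
    rw [Real.div_rpow (hp y) (hq y).le, Real.rpow_sub (hq y), Real.rpow_one]
    ring
  simp only [hmul]
  refine (HasDerivAt.fun_sum fun y _ => (hasDerivAt_const_rpow_one
    (div_nonneg (hp y) (hq y).le)).const_mul (q y)).congr_deriv ?_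
  exact Finset.sum_congr rfl fun y _ => by rw [← mul_assoc, mul_div_cancel₀ _ (hq y).ne']

lemma eventually_renyiD_le_of_klSum_lt {P Q : Y → ℝ≥0∞} (hP : IsDist P) (hQ : ∀ y, Q y ≠ ⊤)
    (hQ0 : ∀ y, Q y ≠ 0) (h : klSum P Q < s) :
    ∀ᶠ b in nhdsWithin 1 (Set.Ioi 1), renyiD (ENNReal.ofReal b) P Q ≤ s := by
  have hpos (y) : 0 < (Q y).toReal := ENNReal.toReal_pos (hQ0 y) (hQ y)
  have hsum (b : ℝ) (hb : 1 < b) : renyiSum b P Q =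
      ENNReal.ofReal (∑ y, (P y).toReal ^ b * (Q y).toReal ^ (1 - b)) := by
    rw [← renyiSum_ofReal (by linarith) hP.ne_top hpos]
    simp only [ENNReal.ofReal_toReal (hQ _)]
  set f : ℝ → ℝ := fun b =>
    ∑ y, (P y).toReal ^ b * (Q y).toReal ^ (1 - b) - 2 ^ ((b - 1) * s) with hf
  have hf1 : f 1 = 0 := by simp [hf, hP.sum_toReal]
  have hderiv : HasDerivAt f ((klSum P Q - s) * Real.log 2) 1 := by
    have hpow : HasDerivAt (fun b : ℝ => (2 : ℝ) ^ ((b - 1) * s)) (s * Real.log 2) 1 := by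
      simpa [mul_comm] using
        (((hasDerivAt_id (1 : ℝ)).sub_const 1).mul_const s).const_rpow two_pos
    refine ((hasDerivAt_sum_mul_rpow_one (fun y => ENNReal.toReal_nonneg) hpos).sub
      hpow).congr_deriv ?_
    rw [sub_mul, klSum, Finset.sum_mul]
    exact congrArg (· - s * Real.log 2) <| Finset.sum_congr rfl fun y _ => by
      rw [mul_assoc, Real.logb, div_mul_cancel₀ _ (Real.log_pos one_lt_two).ne']
  have hneg : deriv f 1 < 0 :=
    hderiv.deriv.trans_lt (mul_neg_of_neg_of_pos (sub_neg.2 h) (Real.log_pos one_lt_two))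
  filter_upwards [nhdsWithin_le_nhds (s := Set.Ioi 1)
    (eventually_nhdsWithin_sign_eq_of_deriv_neg hneg hf1), self_mem_nhdsWithin]
    with b hsign (hb : 1 < b)
  rw [sign_neg (sub_neg.2 hb), sign_eq_neg_one_iff, sub_neg] at hsign
  rw [renyiD_le_iff_of_one_lt hb, hsum b hb, two_rpow_eq_ofReal]
  exact ENNReal.ofReal_le_ofReal hsign.le

lemma Rrst_le_of_klSum_lt [Nonempty X] (h0 : 0 < a) (h1 : a ≤ 1) (hW : IsChannel W)
    {Q : Y → ℝ≥0∞} (hQ : IsDist Q) (hQ0 : ∀ y, Q y ≠ 0) (hQW : ∀ x, klSum (W x) Q < s) {r : ℝ}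
    (hr : 0 ≤ r) (hsr : s < r) : Rrst (ENNReal.ofReal a) W ≤ r := by
  obtain ⟨b, hb, hb1⟩ := ((eventually_all.2 fun x => eventually_renyiD_le_of_klSum_lt (hW x)
    hQ.ne_top hQ0 (hQW x)).and self_mem_nhdsWithin).exists
  refine (Rrst_mono hW fun n P Q hP hQ => ?_).trans (Rrst_le_of_one_lt hb1 hW hQ hr hsr hb)
  refine le_trans ?_ (renyiD_one_le_renyiD hb1 hP hQ.ne_top)
  rcases h1.eq_or_lt with rfl | h1
  · rw [ENNReal.ofReal_one]
  · exact renyiD_le_renyiD_one h0 h1 hP hQ.ne_top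

lemma renyiCap_nonneg [Nonempty X] (α : ℝ≥0∞) (hW : IsChannel W) : 0 ≤ renyiCap α W := by
  have hP := isDist_ofReal (single_mem_stdSimplex ℝ (Classical.arbitrary X))
  refine le_iSup_of_le (⟨_, hP⟩ : {P : X → ℝ≥0∞ // IsDist P}) (le_iInf fun Q => ?_)
  refine renyiD_nonneg α (isDist_joint hP hW) ?_
  rw [margX_joint hW]
  exact isDist_joint hP fun _ => Q.2

lemma Rrst_le_renyiCap [Nonempty X] (hW : IsChannel W)
    (h : ∀ s r : ℝ, 0 ≤ r → s < r → renyiCap β W < s → Rrst α W ≤ r) :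
    Rrst α W ≤ renyiCap β W := by
  rw [← EReal.le_of_forall_lt_iff_le]
  intro r hr
  obtain ⟨s, hs, hsr⟩ := EReal.lt_iff_exists_real_btwn.1 hr
  exact h s r (EReal.coe_nonneg.1 ((renyiCap_nonneg β hW).trans hr.le))
    (EReal.coe_lt_coe_iff.1 hsr) hs

theorem Rrst_eq_renyiCap_one [Nonempty X] (h0 : 0 < a) (h1 : a ≤ 1) (hW : IsChannel W) :
    Rrst (ENNReal.ofReal a) W = renyiCap 1 W := by
  refine le_antisymm (Rrst_le_renyiCap hW fun s r hr hsr hs => ?_) ?_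
  · obtain ⟨Q, hQ, hQ0, hQW⟩ := exists_dist_of_renyiCap_one_lt hW hs
    exact Rrst_le_of_klSum_lt h0 h1 hW hQ hQ0 hQW hr hsr
  · rcases h1.eq_or_lt with rfl | h1
    · exact ENNReal.ofReal_one ▸ renyiCap_one_le_Rrst_one hW
    · exact renyiCap_one_le_Rrst_of_lt_one h0 h1 hW

theorem Rrst_zero_eq_renyiCap [Nonempty X] (hW : IsChannel W) : Rrst 0 W = renyiCap 0 W :=
  le_antisymm (Rrst_le_renyiCap hW fun s r hr hsr hs => by
    obtain ⟨Q, hQ, hQW⟩ := exists_dist_of_renyiCap_zero_lt hW hs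
    exact Rrst_zero_le hW hQ hr hsr hQW) (renyiCap_zero_le_Rrst hW)

theorem Rrst_top_eq_renyiCap [Nonempty X] (hW : IsChannel W) : Rrst ⊤ W = renyiCap ⊤ W :=
  le_antisymm (Rrst_le_renyiCap hW fun s r hr hsr hs => by
    obtain ⟨Q, hQ, hQW⟩ := exists_dist_of_renyiCap_top_lt hW hs
    exact Rrst_top_le hW hQ hr hsr hQW) (renyiCap_top_le_Rrst hW)

theorem Rrst_eq_renyiCap_of_one_lt [Nonempty X] (h1 : 1 < a) (hW : IsChannel W) :
    Rrst (ENNReal.ofReal a) W = renyiCap (ENNReal.ofReal a) W :=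
  le_antisymm (Rrst_le_renyiCap hW fun s r hr hsr hs => by
    obtain ⟨Q, hQ, hQW⟩ := exists_dist_of_renyiCap_lt_of_one_lt h1 hW hs
    exact Rrst_le_of_one_lt h1 hW hQ hr hsr hQW) (renyiCap_le_Rrst_of_one_lt h1 hW)

end SimulationRate

/-- **Reverse Shannon theorem under Rényi divergence** (Theorem 1).
For any discrete memoryless channel `W : X → Y` on finite alphabets, the `α`-Rényi
simulation rate equals the Shannon capacity `I(W) = I_1(W)` for `α ∈ (0,1]`, and the
order-`α` Rényi capacity `I_α(W)` for `α ∈ {0} ∪ (1,∞]`. -/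
theorem renyi_simulation_rate
    {X Y : Type*} [Fintype X] [Fintype Y] [Nonempty X] [Nonempty Y]
    (W : X → Y → ℝ≥0∞) (hW : IsChannel W) :
    (∀ α : ℝ≥0∞, 0 < α → α ≤ 1 → Rrst α W = renyiCap 1 W) ∧
    (∀ α : ℝ≥0∞, α = 0 ∨ 1 < α → Rrst α W = renyiCap α W) := by
  refine ⟨fun α h0 h1 => ?_, fun α hα => ?_⟩
  · obtain ⟨a, rfl⟩ : ∃ a : ℝ, ENNReal.ofReal a = α :=
      ⟨_, ENNReal.ofReal_toReal (ne_top_of_le_ne_top ENNReal.one_ne_top h1)⟩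
    exact Rrst_eq_renyiCap_one (ENNReal.ofReal_pos.1 h0) (ENNReal.ofReal_le_one.1 h1) hW
  · rcases hα with rfl | h1
    · exact Rrst_zero_eq_renyiCap hW
    rcases eq_or_ne α ⊤ with rfl | htop
    · exact Rrst_top_eq_renyiCap hW
    · obtain ⟨a, rfl⟩ : ∃ a : ℝ, ENNReal.ofReal a = α := ⟨_, ENNReal.ofReal_toReal htop⟩
      exact Rrst_eq_renyiCap_of_one_lt (ENNReal.one_lt_ofReal.1 h1) hW

end RST
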